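/- arXiv:1006.2488 — 8 statements merged into one kernel-verified Lean document; each statement's English description precedes it below -/
import Mathlib

section
/- Let $f : I \subseteq \mathbb{R} \to \mathbb{R}$ be twice differentiable on the interior $I^\circ$ of $I$, let $a, b \in I^\circ$ with $a < b$, and suppose $f''$ is integrable on $[a,b]$. Then for every $x \in [a,b]$: $\frac{1}{b-a}\int_a^b f(u)\,du - f(x) + \left(x - \frac{a+b}{2}\right) f'(x) = \frac{(x-a)^3}{2(b-a)} \int_0^1 t^2 f''(tx + (1-t)a)\,dt + \frac{(b-x)^3}{2(b-a)} \int_0^1 t^2 f''(tx + (1-t)b)\,dt$. -/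
open MeasureTheory Set intervalIntegral

/-!
For a base point `c`, the substitution `u = t x + (1 - t) c` turns
`(x - c)³ ∫₀¹ t² f''(t x + (1 - t) c) dt` into `∫_c^x (u - c)² f''(u) du`, and integrating by parts
twice leaves `(x - c)² f'(x) - 2 (x - c) f(x) + 2 ∫_c^x f`. In the difference of these identities
for `c = a` and `c = b` the integrals of `f` combine to `∫_a^b f`, and
`(x - a)² - (x - b)² = 2 (b - a) (x - (a + b) / 2)`; dividing by `2 (b - a)` gives the result.
-/

section

variable {E : Type*} [NormedAddCommGroup E] [NormedSpace ℝ E]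

theorem pow_succ_smul_integral_pow_smul_comp_segment (n : ℕ) (g : ℝ → E) (c x : ℝ) :
    (x - c) ^ (n + 1) • ∫ t in (0 : ℝ)..1, t ^ n • g (t * x + (1 - t) * c)
      = ∫ u in c..x, (u - c) ^ n • g u := by
  have h_segment (t : ℝ) : t * x + (1 - t) * c = (x - c) * t + c := by ring
  calc
    _ = (x - c) • ∫ t in (0 : ℝ)..1, ((x - c) * t + c - c) ^ n • g ((x - c) * t + c) := by
      simp only [add_sub_cancel_right, mul_pow, mul_smul, intervalIntegral.integral_smul,
        h_segment, pow_succ']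
    _ = ∫ u in c..x, (u - c) ^ n • g u := by
      rw [smul_integral_comp_mul_add (fun u ↦ (u - c) ^ n • g u), mul_zero, zero_add, mul_one,
        sub_add_cancel]

variable [CompleteSpace E]

theorem integral_sub_pow_succ_smul_deriv (n : ℕ) {g g' : ℝ → E} {c x : ℝ}
    (hg : ∀ y ∈ uIcc c x, HasDerivWithinAt g (g' y) (uIcc c x) y)
    (hg' : IntervalIntegrable g' volume c x) :
    ∫ u in c..x, (u - c) ^ (n + 1) • g' u
      = (x - c) ^ (n + 1) • g x - (n + 1 : ℝ) • ∫ u in c..x, (u - c) ^ n • g u := by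
  have h_pow (y : ℝ) :
      HasDerivAt (fun u ↦ (u - c) ^ (n + 1)) ((n + 1) * (y - c) ^ n) y := by
    simpa using ((hasDerivAt_id' y).sub_const c).fun_pow (n + 1)
  have h_cont : Continuous fun u : ℝ ↦ (n + 1) * (u - c) ^ n := by fun_prop
  rw [integral_smul_deriv_eq_deriv_smul_of_hasDerivWithinAt
    (fun y _ ↦ (h_pow y).hasDerivWithinAt) hg (h_cont.intervalIntegrable c x) hg']
  simp only [sub_self, zero_pow n.succ_ne_zero, zero_smul, sub_zero, mul_smul,
    intervalIntegral.integral_smul]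

theorem integral_sub_sq_smul_deriv_deriv {f f' f'' : ℝ → E} {c x : ℝ}
    (hf : ∀ y ∈ uIcc c x, HasDerivWithinAt f (f' y) (uIcc c x) y)
    (hf' : ∀ y ∈ uIcc c x, HasDerivWithinAt f' (f'' y) (uIcc c x) y)
    (hf'' : IntervalIntegrable f'' volume c x) :
    ∫ u in c..x, (u - c) ^ 2 • f'' u
      = (x - c) ^ 2 • f' x - (2 * (x - c)) • f x + (2 : ℝ) • ∫ u in c..x, f u := by
  have h_int : IntervalIntegrable f' volume c x :=
    (HasDerivWithinAt.continuousOn hf').intervalIntegrable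
  have h_first := integral_sub_pow_succ_smul_deriv 1 hf' hf''
  have h_second := integral_sub_pow_succ_smul_deriv 0 hf h_int
  simp only [zero_add, pow_zero, one_smul, Nat.cast_zero] at h_second
  rw [h_first, h_second]
  module

theorem stmt0_general {s : Set ℝ} (hs : s.OrdConnected) {f f' f'' : ℝ → E} {a b x : ℝ}
    (ha : a ∈ s) (hb : b ∈ s) (hx : x ∈ s) (hab : a ≠ b)
    (hf : ∀ y ∈ s, HasDerivWithinAt f (f' y) s y)
    (hf' : ∀ y ∈ s, HasDerivWithinAt f' (f'' y) s y)
    (hax : IntervalIntegrable f'' volume a x) (hbx : IntervalIntegrable f'' volume b x) :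
    (1 / (b - a)) • (∫ u in a..b, f u) - f x + (x - (a + b) / 2) • f' x
      = ((x - a) ^ 3 / (2 * (b - a))) • (∫ t in (0 : ℝ)..1, t ^ 2 • f'' (t * x + (1 - t) * a))
        + ((b - x) ^ 3 / (2 * (b - a))) •
          (∫ t in (0 : ℝ)..1, t ^ 2 • f'' (t * x + (1 - t) * b)) := by
  have h_base {c : ℝ} (hc : c ∈ s) (hcx : IntervalIntegrable f'' volume c x) :
      (x - c) ^ 3 • (∫ t in (0 : ℝ)..1, t ^ 2 • f'' (t * x + (1 - t) * c))
        = (x - c) ^ 2 • f' x - (2 * (x - c)) • f x + (2 : ℝ) • ∫ u in c..x, f u := by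
    have h_sub : uIcc c x ⊆ s := hs.uIcc_subset hc hx
    rw [pow_succ_smul_integral_pow_smul_comp_segment, integral_sub_sq_smul_deriv_deriv
      (fun y hy ↦ (hf y (h_sub hy)).mono h_sub) (fun y hy ↦ (hf' y (h_sub hy)).mono h_sub) hcx]
  have h_int {c : ℝ} (hc : c ∈ s) : IntervalIntegrable f volume c x :=
    ((HasDerivWithinAt.continuousOn hf).mono (hs.uIcc_subset hc hx)).intervalIntegrable
  have h_split : ∫ u in a..b, f u = (∫ u in a..x, f u) - ∫ u in b..x, f u := by
    rw [← integral_add_adjacent_intervals (h_int ha) (h_int hb).symm, integral_symm b x,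
      sub_eq_add_neg]
  have h_ne : b - a ≠ 0 := sub_ne_zero.mpr hab.symm
  rw [h_split]
  linear_combination (norm := skip)
    (-(1 / (2 * (b - a)))) • h_base ha hax + (1 / (2 * (b - a))) • h_base hb hbx
  match_scalars <;> field_simp <;> ring

end

theorem stmt0 (I : Set ℝ) (hI : Convex ℝ I) (f f' f'' : ℝ → ℝ) (a b : ℝ)
    (ha : a ∈ interior I) (hb : b ∈ interior I) (hab : a < b)
    (hf' : ∀ y ∈ interior I, HasDerivAt f (f' y) y)
    (hf'' : ∀ y ∈ interior I, HasDerivAt f' (f'' y) y)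
    (hfint : IntervalIntegrable f'' MeasureTheory.volume a b) :
    ∀ x ∈ Set.Icc a b,
      (1 / (b - a)) * (∫ u in a..b, f u) - f x + (x - (a + b) / 2) * f' x
        = (x - a) ^ 3 / (2 * (b - a)) * (∫ t in (0:ℝ)..1, t ^ 2 * f'' (t * x + (1 - t) * a))
          + (b - x) ^ 3 / (2 * (b - a)) * (∫ t in (0:ℝ)..1, t ^ 2 * f'' (t * x + (1 - t) * b)) := by
  intro x hx
  have hxs : x ∈ interior I := hI.interior.ordConnected.out ha hb hx
  have hax : uIcc a x ⊆ uIcc a b := uIcc_subset_uIcc_left (Icc_subset_uIcc hx)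
  have hbx : uIcc b x ⊆ uIcc b a := uIcc_subset_uIcc_left (Icc_subset_uIcc' hx)
  exact stmt0_general hI.interior.ordConnected ha hb hxs hab.ne
    (fun y hy ↦ (hf' y hy).hasDerivWithinAt) (fun y hy ↦ (hf'' y hy).hasDerivWithinAt)
    (hfint.mono_set hax) (hfint.symm.mono_set hbx)
end

section
/- Let $f : I \subset [0,\infty) \to \mathbb{R}$ be twice differentiable on the interior $I^\circ$ of $I$ with $f''$ integrable on $[a,b]$, where $a, b \in I^\circ$ and $a < b$, and suppose $|f''|$ is $s$-convex in the second sense on $[a,b]$ for some fixed $s \in (0,1]$. If $M > 0$ satisfies $|f''(u)| \le M$ for all $u \in [a,b]$, then for every $x \in [a,b]$: $\left| \frac{1}{b-a}\int_a^b f(u)\,du - f(x) + \left(x - \frac{a+b}{2}\right) f'(x) \right| \le 3M \cdot \frac{s^2 + 3s + 4}{(s+1)(s+2)(s+3)} \Big[ \frac{(b-a)^2}{24} + \frac{1}{2}\left(x - \frac{a+b}{2}\right)^2 \Big] \le \frac{M(b-a)^2}{2} \cdot \frac{s^2 + 3s + 4}{(s+1)(s+2)(s+3)}$. -/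
open MeasureTheory Set intervalIntegral

/-!
Integrating the first-order Taylor remainder `f u - f x - (u - x) • f' x` over `[a, b]` and dividing
by `b - a` gives exactly the quantity to be estimated. If `f'` is `M`-Lipschitz, the remainder is at
most `M / 2 * (u - x) ^ 2` in norm, so the quantity is at most
`M * ((b - a) ^ 2 / 24 + (x - (a + b) / 2) ^ 2 / 2)`. The factor
`3 * (s ^ 2 + 3 * s + 4) / ((s + 1) * (s + 2) * (s + 3))` only enlarges this bound: it is at least
`1` for `-1 < s ≤ 1`, with equality at `s = 1`.
-/

section Taylor

variable {E F : Type*} [NormedAddCommGroup E] [NormedSpace ℝ E]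
  [NormedAddCommGroup F] [NormedSpace ℝ F]

theorem norm_image_sub_sub_le_of_norm_hasFDerivWithin_sub_le {D : Set E} {x u : E}
    {f : E → F} {f' : E → E →L[ℝ] F} {K : ℝ} (hD : StarConvex ℝ x D)
    (hf : ∀ y ∈ D, HasFDerivWithinAt f (f' y) D y)
    (hK : ∀ y ∈ D, ‖f' y - f' x‖ ≤ K * ‖y - x‖) (hu : u ∈ D) :
    ‖f u - f x - f' x (u - x)‖ ≤ K / 2 * ‖u - x‖ ^ 2 := by
  let γ : ℝ → E := AffineMap.lineMap x u
  have γ_sub (t : ℝ) : γ t - x = t • (u - x) := by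
    simp only [γ, AffineMap.lineMap_apply_module', add_sub_cancel_right]
  have γ_mem : MapsTo γ (Icc 0 1) D := fun t ht ↦ by
    simpa only [← γ_sub, add_sub_cancel] using hD.add_smul_sub_mem hu ht.1 ht.2
  have deriv_remainder : ∀ t ∈ Icc (0 : ℝ) 1,
      HasDerivWithinAt (fun t ↦ f (γ t) - f x - t • f' x (u - x))
        ((f' (γ t) - f' x) (u - x)) (Icc 0 1) t := fun t ht ↦ by
    have hγ : HasDerivWithinAt γ (u - x) (Icc 0 1) t := AffineMap.hasDerivWithinAt_lineMap
    exact ((((hf _ (γ_mem ht)).comp_hasDerivWithinAt t hγ γ_mem).sub_const (f x)).sub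
      ((hasDerivWithinAt_id t _).smul_const (f' x (u - x)))).congr_deriv (by simp)
  have deriv_majorant (t : ℝ) :
      HasDerivAt (fun t ↦ K / 2 * ‖u - x‖ ^ 2 * t ^ 2) (K * ‖u - x‖ ^ 2 * t) t :=
    ((hasDerivAt_pow 2 t).const_mul _).congr_deriv (by ring)
  have norm_deriv_le : ∀ t ∈ Icc (0 : ℝ) 1,
      ‖(f' (γ t) - f' x) (u - x)‖ ≤ K * ‖u - x‖ ^ 2 * t := fun t ht ↦ calc
    _ ≤ ‖f' (γ t) - f' x‖ * ‖u - x‖ := ContinuousLinearMap.le_opNorm _ _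
    _ ≤ K * ‖γ t - x‖ * ‖u - x‖ := by gcongr; exact hK _ (γ_mem ht)
    _ = K * ‖u - x‖ ^ 2 * t := by
      rw [γ_sub, norm_smul, Real.norm_of_nonneg ht.1]
      ring
  have remainder_le := image_norm_le_of_norm_deriv_right_le_deriv_boundary
    (fun t ht ↦ (deriv_remainder t ht).continuousWithinAt)
    (fun t ht ↦ (deriv_remainder t (Ico_subset_Icc_self ht)).mono_of_mem_nhdsWithin
      (Icc_mem_nhdsGE_of_mem ht))
    (by simp [γ]) deriv_majorant (fun t ht ↦ norm_deriv_le t (Ico_subset_Icc_self ht))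
    (right_mem_Icc.2 zero_le_one)
  simpa [γ] using remainder_le

theorem norm_image_sub_sub_smul_le_of_norm_hasDerivWithin_sub_le {D : Set ℝ} {x u K : ℝ}
    {f f' : ℝ → F} (hD : StarConvex ℝ x D) (hf : ∀ y ∈ D, HasDerivWithinAt f (f' y) D y)
    (hK : ∀ y ∈ D, ‖f' y - f' x‖ ≤ K * |y - x|) (hu : u ∈ D) :
    ‖f u - f x - (u - x) • f' x‖ ≤ K / 2 * (u - x) ^ 2 := by
  have norm_fderiv_sub_le (y : ℝ) (hy : y ∈ D) :
      ‖ContinuousLinearMap.toSpanSingleton ℝ (f' y) - ContinuousLinearMap.toSpanSingleton ℝ (f' x)‖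
        ≤ K * ‖y - x‖ := by
    simp_rw [← ContinuousLinearMap.toSpanSingletonLIE_apply, ← map_sub]
    exact (LinearIsometryEquiv.norm_map _ _).trans_le (hK y hy)
  simpa using norm_image_sub_sub_le_of_norm_hasFDerivWithin_sub_le hD
    (fun y hy ↦ (hf y hy).hasFDerivWithinAt) norm_fderiv_sub_le hu

end Taylor

theorem integral_sub_sq (a b x : ℝ) :
    ∫ u in a..b, (u - x) ^ 2 = (b - a) * ((b - a) ^ 2 / 12 + (x - (a + b) / 2) ^ 2) := by
  rw [integral_comp_sub_right (fun u ↦ u ^ 2), integral_pow]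
  push_cast
  ring

section Average

variable {E : Type*} [NormedAddCommGroup E] [NormedSpace ℝ E] [CompleteSpace E]
  {f f' : ℝ → E} {a b : ℝ}

theorem average_sub_sub_smul (hab : a ≠ b) (hf : IntervalIntegrable f volume a b) (x : ℝ)
    (y c : E) :
    (1 / (b - a)) • ∫ u in a..b, (f u - y - (u - x) • c) =
      (1 / (b - a)) • (∫ u in a..b, f u) - y + (x - (a + b) / 2) • c := by
  have hba : b - a ≠ 0 := sub_ne_zero.2 hab.symm
  have linear_integrable : IntervalIntegrable (fun u ↦ (u - x) • c) volume a b :=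
    Continuous.intervalIntegrable (by fun_prop) a b
  have linear_integral : ∫ u in a..b, (u - x) = (b - a) * ((a + b) / 2 - x) := by
    rw [integral_comp_sub_right (fun u ↦ u), integral_id]
    ring
  rw [integral_sub (hf.sub intervalIntegrable_const) linear_integrable,
    integral_sub hf intervalIntegrable_const, intervalIntegral.integral_const,
    intervalIntegral.integral_smul_const, linear_integral]
  match_scalars <;> field_simp
  ring

theorem norm_average_sub_add_smul_le_of_norm_deriv_sub_le {x K : ℝ} (hab : a < b)
    (hf : ∀ y ∈ Icc a b, HasDerivWithinAt f (f' y) (Icc a b) y) (hx : x ∈ Icc a b)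
    (hK : ∀ y ∈ Icc a b, ‖f' y - f' x‖ ≤ K * |y - x|) :
    ‖(1 / (b - a)) • (∫ u in a..b, f u) - f x + (x - (a + b) / 2) • f' x‖ ≤
      K * ((b - a) ^ 2 / 24 + (1 / 2) * (x - (a + b) / 2) ^ 2) := by
  have hba : 0 < b - a := sub_pos.2 hab
  have f_integrable : IntervalIntegrable f volume a b :=
    ContinuousOn.intervalIntegrable_of_Icc hab.le fun y hy ↦ (hf y hy).continuousWithinAt
  have remainder_le (u : ℝ) (hu : u ∈ Ioc a b) :
      ‖f u - f x - (u - x) • f' x‖ ≤ K / 2 * (u - x) ^ 2 :=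
    norm_image_sub_sub_smul_le_of_norm_hasDerivWithin_sub_le ((convex_Icc a b).starConvex hx) hf hK
      (Ioc_subset_Icc_self hu)
  calc
    _ = ‖(1 / (b - a)) • ∫ u in a..b, (f u - f x - (u - x) • f' x)‖ := by
      rw [average_sub_sub_smul hab.ne f_integrable]
    _ = 1 / (b - a) * ‖∫ u in a..b, (f u - f x - (u - x) • f' x)‖ :=
      norm_smul_of_nonneg (by positivity) _
    _ ≤ 1 / (b - a) * ∫ u in a..b, K / 2 * (u - x) ^ 2 := by
      gcongr
      exact intervalIntegral.norm_integral_le_of_norm_le hab.le (ae_of_all _ remainder_le)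
        (Continuous.intervalIntegrable (by fun_prop) a b)
    _ = K * ((b - a) ^ 2 / 24 + (1 / 2) * (x - (a + b) / 2) ^ 2) := by
      rw [intervalIntegral.integral_const_mul, integral_sub_sq]
      field_simp
      ring

end Average

theorem sub_midpoint_sq_le {a b x : ℝ} (hx : x ∈ Icc a b) :
    (x - (a + b) / 2) ^ 2 ≤ (b - a) ^ 2 / 4 := by
  linarith [mul_nonneg (sub_nonneg.2 hx.1) (sub_nonneg.2 hx.2)]

theorem one_le_three_mul_sq_add_div {s : ℝ} (hs : s ∈ Ioc (-1) 1) :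
    1 ≤ 3 * ((s ^ 2 + 3 * s + 4) / ((s + 1) * (s + 2) * (s + 3))) := by
  obtain ⟨hs_gt, hs_le⟩ := hs
  have h1 : 0 < s + 1 := by linarith
  have h2 : 0 < s + 2 := by linarith
  have h3 : 0 < s + 3 := by linarith
  have numerator_sub_denominator :
      0 ≤ 3 * (s ^ 2 + 3 * s + 4) - (s + 1) * (s + 2) * (s + 3) := calc
    0 ≤ (1 - s) * ((s + 2) ^ 2 + 2) := mul_nonneg (sub_nonneg.2 hs_le) (by positivity)
    _ = 3 * (s ^ 2 + 3 * s + 4) - (s + 1) * (s + 2) * (s + 3) := by ring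
  rw [← mul_div_assoc, one_le_div (by positivity)]
  exact sub_nonneg.1 numerator_sub_denominator

theorem stmt2_general {E : Type*} [NormedAddCommGroup E] [NormedSpace ℝ E] [CompleteSpace E]
    {f f' : ℝ → E} {a b : ℝ} {M : NNReal} (hab : a < b)
    (hf : ∀ y ∈ Icc a b, HasDerivWithinAt f (f' y) (Icc a b) y)
    (hf' : LipschitzOnWith M f' (Icc a b)) {s : ℝ} (hs : s ∈ Ioc (-1) 1) :
    ∀ x ∈ Icc a b,
      ‖(1 / (b - a)) • (∫ u in a..b, f u) - f x + (x - (a + b) / 2) • f' x‖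
          ≤ 3 * M * ((s ^ 2 + 3 * s + 4) / ((s + 1) * (s + 2) * (s + 3))) *
              ((b - a) ^ 2 / 24 + (1 / 2) * (x - (a + b) / 2) ^ 2)
        ∧ 3 * M * ((s ^ 2 + 3 * s + 4) / ((s + 1) * (s + 2) * (s + 3))) *
              ((b - a) ^ 2 / 24 + (1 / 2) * (x - (a + b) / 2) ^ 2)
          ≤ M * (b - a) ^ 2 / 2 * ((s ^ 2 + 3 * s + 4) / ((s + 1) * (s + 2) * (s + 3))) := by
  intro x hx
  have one_le_factor := one_le_three_mul_sq_add_div hs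
  set C := (s ^ 2 + 3 * s + 4) / ((s + 1) * (s + 2) * (s + 3))
  have hC : 0 ≤ C := by linarith
  constructor
  · calc
      _ ≤ M * ((b - a) ^ 2 / 24 + (1 / 2) * (x - (a + b) / 2) ^ 2) :=
        norm_average_sub_add_smul_le_of_norm_deriv_sub_le hab hf hx
          fun y hy ↦ hf'.norm_sub_le hy hx
      _ ≤ 3 * C * (M * ((b - a) ^ 2 / 24 + (1 / 2) * (x - (a + b) / 2) ^ 2)) :=
        le_mul_of_one_le_left (by positivity) one_le_factor
      _ = 3 * M * C * ((b - a) ^ 2 / 24 + (1 / 2) * (x - (a + b) / 2) ^ 2) := by ring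
  · calc
      _ ≤ 3 * M * C * ((b - a) ^ 2 / 24 + (1 / 2) * ((b - a) ^ 2 / 4)) := by
        gcongr
        exact sub_midpoint_sq_le hx
      _ = M * (b - a) ^ 2 / 2 * C := by ring

theorem stmt2 (I : Set ℝ) (hI : Convex ℝ I) (hI0 : I ⊆ Set.Ici (0:ℝ)) (f f' f'' : ℝ → ℝ) (a b : ℝ)
    (ha : a ∈ interior I) (hb : b ∈ interior I) (hab : a < b)
    (hf' : ∀ y ∈ interior I, HasDerivAt f (f' y) y)
    (hf'' : ∀ y ∈ interior I, HasDerivAt f' (f'' y) y)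
    (hfint : IntervalIntegrable f'' MeasureTheory.volume a b)
    (s : ℝ) (hs : s ∈ Set.Ioc (0:ℝ) 1)
    (hconv : ∀ u ∈ Set.Icc a b, ∀ v ∈ Set.Icc a b, ∀ t ∈ Set.Icc (0:ℝ) 1,
      |f'' (t * u + (1 - t) * v)| ≤ t ^ s * |f'' u| + (1 - t) ^ s * |f'' v|)
    (M : ℝ) (hM : 0 < M) (hbd : ∀ u ∈ Set.Icc a b, |f'' u| ≤ M) :
    ∀ x ∈ Set.Icc a b,
      |(1 / (b - a)) * (∫ u in a..b, f u) - f x + (x - (a + b) / 2) * f' x|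
          ≤ 3 * M * ((s ^ 2 + 3 * s + 4) / ((s + 1) * (s + 2) * (s + 3))) *
              ((b - a) ^ 2 / 24 + (1 / 2) * (x - (a + b) / 2) ^ 2)
        ∧ 3 * M * ((s ^ 2 + 3 * s + 4) / ((s + 1) * (s + 2) * (s + 3))) *
              ((b - a) ^ 2 / 24 + (1 / 2) * (x - (a + b) / 2) ^ 2)
          ≤ M * (b - a) ^ 2 / 2 * ((s ^ 2 + 3 * s + 4) / ((s + 1) * (s + 2) * (s + 3))) := by
  have hsub : Icc a b ⊆ interior I := hI.interior.ordConnected.out ha hb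
  exact stmt2_general (M := ⟨M, hM.le⟩) hab (fun y hy ↦ (hf' y (hsub hy)).hasDerivWithinAt)
    ((convex_Icc a b).lipschitzOnWith_of_nnnorm_hasDerivWithin_le
      (fun y hy ↦ (hf'' y (hsub hy)).hasDerivWithinAt) hbd)
    (Ioc_subset_Ioc_left (by norm_num) hs)
end

section
/- Let $f : I \subset [0,\infty) \to \mathbb{R}$ be twice differentiable on the interior $I^\circ$ of $I$ with $f''$ integrable on $[a,b]$, where $a, b \in I^\circ$ and $a < b$, and suppose $|f''|$ is $s$-convex in the second sense on $[a,b]$ for some fixed $s \in (0,1]$. If $M > 0$ satisfies $|f''(u)| \le M$ for all $u \in [a,b]$, then $\left| \frac{1}{b-a}\int_a^b f(u)\,du - f\!\left(\frac{a+b}{2}\right) \right| \le \frac{M(b-a)^2}{2} \cdot \frac{s^2 + 3s + 4}{(s+1)(s+2)(s+3)}$. -/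
open MeasureTheory Set intervalIntegral

/-
With `c` the midpoint and `h` the half-length of `[a, b]`, the error of the midpoint rule is the
integral over `[0, h]` of the second difference `f (c + t) + f (c - t) - 2 f c`. Its derivative
`f' (c + t) - f' (c - t)` is at most `2 M t` in norm, so the second difference is at most `M t²`,
and the mean value differs from `f c` by at most `M (b - a)² / 24`. The `s`-dependent factor of the
theorem is at least `1 / 3` for `0 ≤ s ≤ 1`, so its bound is at least `M (b - a)² / 6`.
-/

section MidpointRule

open scoped NNReal

lemma continuousOn_comp_add_add_comp_sub {X : Type*} [TopologicalSpace X] [Add X] [ContinuousAdd X]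
    {f : ℝ → X} {c h : ℝ} (hf : ContinuousOn f (Icc (c - h) (c + h))) :
    ContinuousOn (fun t ↦ f (c + t) + f (c - t)) (Icc 0 h) :=
  (hf.comp (by fun_prop) fun x hx ↦ ⟨by linarith [hx.1, hx.2], by linarith [hx.2]⟩).add
    (hf.comp (by fun_prop) fun x hx ↦ ⟨by linarith [hx.2], by linarith [hx.1, hx.2]⟩)

variable {E : Type*} [NormedAddCommGroup E] [NormedSpace ℝ E] {f f' f'' : ℝ → E} {c h : ℝ} {K : ℝ≥0}

lemma norm_second_difference_le (hf : ContinuousOn f (Icc (c - h) (c + h)))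
    (hf' : ∀ y ∈ Ioo (c - h) (c + h), HasDerivAt f (f' y) y)
    (hK : LipschitzOnWith K f' (Ioo (c - h) (c + h))) {t : ℝ} (ht : t ∈ Icc 0 h) :
    ‖f (c + t) + f (c - t) - (2 : ℝ) • f c‖ ≤ K * t ^ 2 := by
  have hadd_mem : ∀ x ∈ Ico 0 h, c + x ∈ Ioo (c - h) (c + h) := fun x hx ↦
    ⟨by linarith [hx.1, hx.2], by linarith [hx.2]⟩
  have hsub_mem : ∀ x ∈ Ico 0 h, c - x ∈ Ioo (c - h) (c + h) := fun x hx ↦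
    ⟨by linarith [hx.2], by linarith [hx.1, hx.2]⟩
  have hderiv : ∀ x ∈ Ico 0 h, HasDerivWithinAt (fun t ↦ f (c + t) + f (c - t) - (2 : ℝ) • f c)
      (f' (c + x) - f' (c - x)) (Ici x) x := fun x hx ↦ by
    have hadd := (hf' _ (hadd_mem x hx)).comp_const_add c x
    have hsub := (hf' _ (hsub_mem x hx)).comp_const_sub c x
    simpa only [← sub_eq_add_neg] using ((hadd.fun_add hsub).sub_const _).hasDerivWithinAt
  have hbound : ∀ x ∈ Ico 0 h, ‖f' (c + x) - f' (c - x)‖ ≤ K * (2 * x) := fun x hx ↦ by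
    have hdist : ‖c + x - (c - x)‖ = 2 * x := by
      rw [Real.norm_of_nonneg (by linarith [hx.1])]; ring
    simpa only [hdist] using hK.norm_sub_le (hadd_mem x hx) (hsub_mem x hx)
  refine image_norm_le_of_norm_deriv_right_le_deriv_boundary
    ((continuousOn_comp_add_add_comp_sub hf).sub continuousOn_const) hderiv ?_
    (fun x ↦ by simpa using (hasDerivAt_pow 2 x).const_mul (K : ℝ)) hbound ht
  simp [two_smul]

lemma integral_eq_integral_comp_add_add_comp_sub
    (hleft : IntervalIntegrable f volume (c - h) c)
    (hright : IntervalIntegrable f volume c (c + h)) :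
    ∫ u in (c - h)..(c + h), f u = ∫ t in 0..h, (f (c + t) + f (c - t)) := by
  have hadd : IntervalIntegrable (fun t ↦ f (c + t)) volume 0 h := by
    simpa using hright.comp_add_left c
  have hsub : IntervalIntegrable (fun t ↦ f (c - t)) volume 0 h := by
    simpa using (hleft.comp_sub_left c).symm
  rw [intervalIntegral.integral_add hadd hsub, integral_comp_add_left, integral_comp_sub_left,
    add_zero, sub_zero, add_comm (∫ x in c..c + h, f x),
    integral_add_adjacent_intervals hleft hright]

lemma norm_integral_sub_smul_midpoint_le [CompleteSpace E] (hh : 0 ≤ h)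
    (hf : ContinuousOn f (Icc (c - h) (c + h)))
    (hf' : ∀ y ∈ Ioo (c - h) (c + h), HasDerivAt f (f' y) y)
    (hK : LipschitzOnWith K f' (Ioo (c - h) (c + h))) :
    ‖(∫ u in (c - h)..(c + h), f u) - (2 * h) • f c‖ ≤ K * h ^ 3 / 3 := by
  have hleft : IntervalIntegrable f volume (c - h) c :=
    (hf.mono (Icc_subset_Icc_right (by linarith))).intervalIntegrable_of_Icc (by linarith)
  have hright : IntervalIntegrable f volume c (c + h) :=
    (hf.mono (Icc_subset_Icc_left (by linarith))).intervalIntegrable_of_Icc (by linarith)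
  have hsum : IntervalIntegrable (fun t ↦ f (c + t) + f (c - t)) volume 0 h :=
    (continuousOn_comp_add_add_comp_sub hf).intervalIntegrable_of_Icc hh
  calc ‖(∫ u in (c - h)..(c + h), f u) - (2 * h) • f c‖
      = ‖∫ t in 0..h, (f (c + t) + f (c - t) - (2 : ℝ) • f c)‖ := by
        rw [intervalIntegral.integral_sub hsum intervalIntegrable_const,
          integral_eq_integral_comp_add_add_comp_sub hleft hright, intervalIntegral.integral_const,
          sub_zero, smul_smul, mul_comm h]
    _ ≤ ∫ t in 0..h, K * t ^ 2 :=
        intervalIntegral.norm_integral_le_of_norm_le hh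
          (.of_forall fun t ht ↦ norm_second_difference_le hf hf' hK (Ioc_subset_Icc_self ht))
          (Continuous.intervalIntegrable (by fun_prop) _ _)
    _ = K * h ^ 3 / 3 := by
        rw [intervalIntegral.integral_const_mul, integral_pow]; push_cast; ring

theorem stmt3_general [CompleteSpace E] {a b M : ℝ} (hab : a < b)
    (hf : ContinuousOn f (Icc a b))
    (hf' : ∀ y ∈ Ioo a b, HasDerivAt f (f' y) y)
    (hf'' : ∀ y ∈ Ioo a b, HasDerivAt f' (f'' y) y)
    (hM : ∀ y ∈ Ioo a b, ‖f'' y‖ ≤ M) :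
    ‖(1 / (b - a)) • (∫ u in a..b, f u) - f ((a + b) / 2)‖ ≤ M * (b - a) ^ 2 / 24 := by
  obtain ⟨c, h, rfl, rfl⟩ : ∃ c h, a = c - h ∧ b = c + h :=
    ⟨(a + b) / 2, (b - a) / 2, by ring, by ring⟩
  have hh : 0 < h := by linarith
  lift M to ℝ≥0 using (norm_nonneg _).trans (hM c ⟨by linarith, by linarith⟩)
  have hlip : LipschitzOnWith M f' (Ioo (c - h) (c + h)) :=
    (convex_Ioo _ _).lipschitzOnWith_of_nnnorm_hasDerivWithin_le
      (fun y hy ↦ (hf'' y hy).hasDerivWithinAt) hM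
  have hlength : c + h - (c - h) = 2 * h := by ring
  have hmid : (c - h + (c + h)) / 2 = c := by ring
  have herror : (1 / (2 * h)) • (∫ u in (c - h)..(c + h), f u) - f c =
      (1 / (2 * h)) • ((∫ u in (c - h)..(c + h), f u) - (2 * h) • f c) := by
    rw [smul_sub, smul_smul, one_div_mul_cancel (by positivity), one_smul]
  rw [hlength, hmid, herror, norm_smul, Real.norm_of_nonneg (by positivity)]
  calc 1 / (2 * h) * ‖(∫ u in (c - h)..(c + h), f u) - (2 * h) • f c‖
      ≤ 1 / (2 * h) * (M * h ^ 3 / 3) := by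
        gcongr
        exact norm_integral_sub_smul_midpoint_le hh.le hf hf' hlip
    _ = M * (2 * h) ^ 2 / 24 := by field_simp; ring

end MidpointRule

lemma one_third_le_midpoint_factor {s : ℝ} (hs : s ∈ Icc (0 : ℝ) 1) :
    1 / 3 ≤ (s ^ 2 + 3 * s + 4) / ((s + 1) * (s + 2) * (s + 3)) := by
  obtain ⟨hs0, hs1⟩ := hs
  have hdiff : 0 ≤ (1 - s) * (s ^ 2 + 4 * s + 6) :=
    mul_nonneg (sub_nonneg.2 hs1) (by positivity)
  rw [div_le_div_iff₀ (by norm_num) (by positivity)]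
  linarith

theorem stmt3 (I : Set ℝ) (hI : Convex ℝ I) (hI0 : I ⊆ Set.Ici (0:ℝ)) (f f' f'' : ℝ → ℝ) (a b : ℝ)
    (ha : a ∈ interior I) (hb : b ∈ interior I) (hab : a < b)
    (hf' : ∀ y ∈ interior I, HasDerivAt f (f' y) y)
    (hf'' : ∀ y ∈ interior I, HasDerivAt f' (f'' y) y)
    (hfint : IntervalIntegrable f'' MeasureTheory.volume a b)
    (s : ℝ) (hs : s ∈ Set.Ioc (0:ℝ) 1)
    (hconv : ∀ u ∈ Set.Icc a b, ∀ v ∈ Set.Icc a b, ∀ t ∈ Set.Icc (0:ℝ) 1,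
      |f'' (t * u + (1 - t) * v)| ≤ t ^ s * |f'' u| + (1 - t) ^ s * |f'' v|)
    (M : ℝ) (hM : 0 < M) (hbd : ∀ u ∈ Set.Icc a b, |f'' u| ≤ M) :
    |(1 / (b - a)) * (∫ u in a..b, f u) - f ((a + b) / 2)|
      ≤ M * (b - a) ^ 2 / 2 * ((s ^ 2 + 3 * s + 4) / ((s + 1) * (s + 2) * (s + 3))) := by
  have hsub : Icc a b ⊆ interior I := hI.interior.ordConnected.out ha hb
  have hsub' : Ioo a b ⊆ interior I := Ioo_subset_Icc_self.trans hsub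
  calc |(1 / (b - a)) * (∫ u in a..b, f u) - f ((a + b) / 2)|
      ≤ M * (b - a) ^ 2 / 24 :=
        stmt3_general hab (fun y hy ↦ (hf' y (hsub hy)).continuousAt.continuousWithinAt)
          (fun y hy ↦ hf' y (hsub' hy)) (fun y hy ↦ hf'' y (hsub' hy))
          fun y hy ↦ hbd y (Ioo_subset_Icc_self hy)
    _ ≤ M * (b - a) ^ 2 / 2 * (1 / 3) := by linarith [show 0 ≤ M * (b - a) ^ 2 by positivity]
    _ ≤ _ :=
        mul_le_mul_of_nonneg_left (one_third_le_midpoint_factor (Ioc_subset_Icc_self hs))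
          (by positivity)
end

section
/- Let $f : I \subset [0,\infty) \to \mathbb{R}$ be twice differentiable on the interior $I^\circ$ of $I$ with $f''$ integrable on $[a,b]$, where $a, b \in I^\circ$ and $a < b$. Let $p, q > 1$ with $\frac{1}{p} + \frac{1}{q} = 1$, and suppose $|f''|^q$ is $s$-convex in the second sense on $[a,b]$ for some fixed $s \in (0,1]$. Then for every $x \in [a,b]$: $\left| \frac{1}{b-a}\int_a^b f(u)\,du - f(x) + \left(x - \frac{a+b}{2}\right) f'(x) \right| \le \frac{(x-a)^3}{2(b-a)} \left(\frac{1}{2p+1}\right)^{1/p} \left( \frac{|f''(x)|^q + |f''(a)|^q}{s+1} \right)^{1/q} + \frac{(b-x)^3}{2(b-a)} \left(\frac{1}{2p+1}\right)^{1/p} \left( \frac{|f''(x)|^q + |f''(b)|^q}{s+1} \right)^{1/q}$. -/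
open MeasureTheory Set intervalIntegral

/-!
Integrating by parts twice against the Peano kernel, which is `(u - a)²` on `[a, x]` and
`(u - b)²` on `[x, b]`, expresses the Ostrowski-type defect as the sum of two moments of `f''`.
Each moment is rescaled to `[0, 1]` and split by Hölder's inequality; the factor `∫ |f''|^q` is
then controlled by the Hermite–Hadamard inequality for `s`-convex functions.
-/

/-- `s`-convexity of `g` on `S` in the second sense (Breckner), bounding `g` along segments by its
values at the end points. The weights range over the open interval `(0, 1)`: this avoids `0 ^ s`, so
that the definition also covers `P`-functions (`s = 0`) and `s`-Godunova–Levin functions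
(`s < 0`). -/
def SConvexOn (s : ℝ) (S : Set ℝ) (g : ℝ → ℝ) : Prop :=
  ∀ u ∈ S, ∀ v ∈ S, ∀ t ∈ Ioo (0 : ℝ) 1,
    g (t * u + (1 - t) * v) ≤ t ^ s * g u + (1 - t) ^ s * g v

section UnitInterval

variable {s : ℝ}

lemma integral_rpow_zero_one (hs : -1 < s) : ∫ t in (0 : ℝ)..1, t ^ s = 1 / (s + 1) := by
  rw [integral_rpow (Or.inl hs), Real.one_rpow, Real.zero_rpow (by linarith), sub_zero]

lemma intervalIntegrable_one_sub_rpow (hs : -1 < s) :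
    IntervalIntegrable (fun t : ℝ => (1 - t) ^ s) volume 0 1 := by
  simpa using (intervalIntegrable_rpow' (a := 1) (b := 0) hs).comp_sub_left 1

lemma intervalIntegrable_rpow_mul_add_one_sub_rpow_mul (hs : -1 < s) (A B : ℝ) :
    IntervalIntegrable (fun t : ℝ => t ^ s * A + (1 - t) ^ s * B) volume 0 1 :=
  ((intervalIntegrable_rpow' hs).mul_const A).add
    ((intervalIntegrable_one_sub_rpow hs).mul_const B)

lemma integral_rpow_mul_add_one_sub_rpow_mul (hs : -1 < s) (A B : ℝ) :
    ∫ t in (0 : ℝ)..1, (t ^ s * A + (1 - t) ^ s * B) = (A + B) / (s + 1) := by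
  have integral_one_sub : ∫ t in (0 : ℝ)..1, (1 - t) ^ s = 1 / (s + 1) := by
    rw [integral_comp_sub_left (fun t : ℝ => t ^ s) 1, sub_self, sub_zero,
      integral_rpow_zero_one hs]
  rw [integral_add ((intervalIntegrable_rpow' hs).mul_const A)
      ((intervalIntegrable_one_sub_rpow hs).mul_const B),
    intervalIntegral.integral_mul_const, intervalIntegral.integral_mul_const,
    integral_rpow_zero_one hs, integral_one_sub]
  ring

end UnitInterval

namespace SConvexOn

variable {s : ℝ} {S : Set ℝ} {g : ℝ → ℝ} {u v : ℝ}

lemma intervalIntegrable_segment (hg : SConvexOn s S g) (hs : -1 < s) (hg0 : 0 ≤ g)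
    (hu : u ∈ S) (hv : v ∈ S)
    (hmeas : AEStronglyMeasurable (fun t => g (t * u + (1 - t) * v))
      (volume.restrict (Ioo 0 1))) :
    IntervalIntegrable (fun t => g (t * u + (1 - t) * v)) volume 0 1 := by
  have hbound := (intervalIntegrable_iff_integrableOn_Ioo_of_le zero_le_one).1
    (intervalIntegrable_rpow_mul_add_one_sub_rpow_mul hs (g u) (g v))
  refine (intervalIntegrable_iff_integrableOn_Ioo_of_le zero_le_one).2 (hbound.mono' hmeas ?_)
  refine ae_restrict_of_forall_mem measurableSet_Ioo fun t ht => ?_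
  rw [Real.norm_of_nonneg (hg0 _)]
  exact hg u hu v hv t ht

lemma integral_segment_le (hg : SConvexOn s S g) (hs : -1 < s) (hu : u ∈ S) (hv : v ∈ S)
    (hint : IntervalIntegrable (fun t => g (t * u + (1 - t) * v)) volume 0 1) :
    ∫ t in (0 : ℝ)..1, g (t * u + (1 - t) * v) ≤ (g u + g v) / (s + 1) :=
  calc ∫ t in (0 : ℝ)..1, g (t * u + (1 - t) * v)
      ≤ ∫ t in (0 : ℝ)..1, (t ^ s * g u + (1 - t) ^ s * g v) :=
        integral_mono_on_of_le_Ioo zero_le_one hint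
          (intervalIntegrable_rpow_mul_add_one_sub_rpow_mul hs _ _) (hg u hu v hv)
    _ = (g u + g v) / (s + 1) := integral_rpow_mul_add_one_sub_rpow_mul hs _ _

end SConvexOn

lemma integral_pow_sub_mul_eq_pow_mul_integral_segment (n : ℕ) (h : ℝ → ℝ) (c x : ℝ) :
    ∫ u in c..x, (u - c) ^ n * h u =
      (x - c) ^ (n + 1) * ∫ t in (0 : ℝ)..1, t ^ n * h (t * x + (1 - t) * c) := by
  have hsubst := mul_integral_comp_mul_add (a := 0) (b := 1)
    (f := fun u => (u - c) ^ n * h u) (c := x - c) (d := c)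
  simp only [mul_zero, zero_add, mul_one, sub_add_cancel, add_sub_cancel_right] at hsubst
  rw [← hsubst, pow_succ', mul_assoc, ← intervalIntegral.integral_const_mul ((x - c) ^ n)]
  congr 2 with t
  rw [show (x - c) * t + c = t * x + (1 - t) * c by ring, mul_pow, mul_assoc]

lemma intervalIntegrable_comp_segment {h : ℝ → ℝ} {c x : ℝ}
    (hh : IntervalIntegrable h volume c x) :
    IntervalIntegrable (fun t => h (t * x + (1 - t) * c)) volume 0 1 := by
  rcases eq_or_ne x c with rfl | hxc
  · simp [← add_mul]
  have hcomp := (hh.comp_add_right c).comp_mul_left (c := x - c)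
  simp only [sub_self, zero_div, div_self (sub_ne_zero.2 hxc)] at hcomp
  convert hcomp using 3
  ring

section Moments

variable {p q : ℝ}

lemma abs_integral_pow_mul_le_of_memLp (hpq : p.HolderConjugate q) (n : ℕ) {h : ℝ → ℝ}
    (hh : MemLp h (ENNReal.ofReal q) (volume.restrict (Ioc 0 1))) :
    |∫ t in (0 : ℝ)..1, t ^ n * h t| ≤
      (1 / (n * p + 1)) ^ (1 / p) * (∫ t in (0 : ℝ)..1, |h t| ^ q) ^ (1 / q) := by
  have hpow : MemLp (fun t : ℝ => t ^ n) (ENNReal.ofReal p) (volume.restrict (Ioc 0 1)) := by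
    refine MemLp.of_bound (by fun_prop) 1 (ae_restrict_of_forall_mem measurableSet_Ioc ?_)
    intro t ht
    rw [norm_pow, Real.norm_of_nonneg ht.1.le]
    exact pow_le_one₀ ht.1.le ht.2
  have hnorm : ∫ t in (0 : ℝ)..1, |t ^ n| ^ p = 1 / (n * p + 1) := by
    rw [← integral_rpow_zero_one (by linarith [mul_nonneg n.cast_nonneg hpq.nonneg])]
    refine integral_congr fun t ht => ?_
    rw [uIcc_of_le zero_le_one] at ht
    simp only [abs_of_nonneg (pow_nonneg ht.1 n), Real.rpow_natCast_mul ht.1]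
  have hHolder := integral_mul_norm_le_Lp_mul_Lq hpq hpow hh
  simp only [← integral_of_le (zero_le_one (α := ℝ)), Real.norm_eq_abs, ← abs_mul, hnorm]
    at hHolder
  exact (abs_integral_le_integral_abs zero_le_one).trans hHolder

lemma abs_integral_pow_sub_mul_le_of_sConvexOn (hpq : p.HolderConjugate q) (n : ℕ)
    {s : ℝ} (hs : -1 < s) {S : Set ℝ} {h : ℝ → ℝ} {c x : ℝ} (hc : c ∈ S) (hx : x ∈ S)
    (hint : IntervalIntegrable h volume c x) (hconv : SConvexOn s S fun u => |h u| ^ q) :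
    |∫ u in c..x, (u - c) ^ n * h u| ≤ |x - c| ^ (n + 1) *
      ((1 / (n * p + 1)) ^ (1 / p) * ((|h x| ^ q + |h c| ^ q) / (s + 1)) ^ (1 / q)) := by
  have hq : 0 < q := hpq.symm.pos
  have hmeas : AEStronglyMeasurable (fun t => h (t * x + (1 - t) * c))
      (volume.restrict (Ioc 0 1)) :=
    (intervalIntegrable_comp_segment hint).1.aestronglyMeasurable
  have hpow_int : IntervalIntegrable (fun t => |h (t * x + (1 - t) * c)| ^ q) volume 0 1 :=
    hconv.intervalIntegrable_segment hs (fun u => by positivity) hx hc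
      ((hmeas.norm.aemeasurable.pow_const q).aestronglyMeasurable.mono_measure
        (Measure.restrict_mono_set _ Ioo_subset_Ioc_self))
  have hLq : MemLp (fun t => h (t * x + (1 - t) * c)) (ENNReal.ofReal q)
      (volume.restrict (Ioc 0 1)) := by
    refine (integrable_norm_rpow_iff hmeas (by simpa using hq) ENNReal.ofReal_ne_top).1 ?_
    simpa only [ENNReal.toReal_ofReal hq.le, Real.norm_eq_abs, IntegrableOn] using hpow_int.1
  have hpow_nonneg : 0 ≤ ∫ t in (0 : ℝ)..1, |h (t * x + (1 - t) * c)| ^ q :=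
    integral_nonneg zero_le_one fun t _ => by positivity
  have hp : 0 < p := hpq.pos
  rw [integral_pow_sub_mul_eq_pow_mul_integral_segment, abs_mul, abs_pow]
  gcongr
  refine (abs_integral_pow_mul_le_of_memLp hpq n hLq).trans ?_
  gcongr
  exact hconv.integral_segment_le hs hx hc hpow_int

end Moments

section PeanoKernel

variable {f f' f'' : ℝ → ℝ}

lemma integral_sub_sq_mul_deriv2_eq {c x : ℝ}
    (hf : ∀ u ∈ uIcc c x, HasDerivWithinAt f (f' u) (uIcc c x) u)
    (hf' : ∀ u ∈ uIcc c x, HasDerivWithinAt f' (f'' u) (uIcc c x) u)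
    (hint : IntervalIntegrable f'' volume c x) :
    ∫ u in c..x, (u - c) ^ 2 * f'' u =
      (x - c) ^ 2 * f' x - 2 * (x - c) * f x + 2 * ∫ u in c..x, f u := by
  have hf'_int : IntervalIntegrable f' volume c x :=
    ContinuousOn.intervalIntegrable fun u hu => (hf' u hu).continuousWithinAt
  have hderiv_sub (u : ℝ) : HasDerivAt (fun u => u - c) 1 u := (hasDerivAt_id u).sub_const c
  have hderiv_sq (u : ℝ) : HasDerivAt (fun u => (u - c) ^ 2) (2 * (u - c)) u := by
    simpa using (hderiv_sub u).fun_pow 2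
  have hfirst : ∫ u in c..x, (u - c) ^ 2 * f'' u =
      (x - c) ^ 2 * f' x - 2 * ∫ u in c..x, (u - c) * f' u := by
    rw [integral_mul_deriv_eq_deriv_mul_of_hasDerivWithinAt
      (fun u _ => (hderiv_sq u).hasDerivWithinAt) hf'
      (Continuous.intervalIntegrable (by fun_prop) _ _) hint]
    simp [mul_assoc]
  have hsecond : ∫ u in c..x, (u - c) * f' u = (x - c) * f x - ∫ u in c..x, f u := by
    rw [integral_mul_deriv_eq_deriv_mul_of_hasDerivWithinAt
      (fun u _ => (hderiv_sub u).hasDerivWithinAt) hf intervalIntegrable_const hf'_int]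
    simp
  rw [hfirst, hsecond]
  ring

lemma average_sub_add_eq_integral_peanoKernel {a b x : ℝ} (hab : a ≠ b) (hx : x ∈ uIcc a b)
    (hf : ∀ u ∈ uIcc a b, HasDerivWithinAt f (f' u) (uIcc a b) u)
    (hf' : ∀ u ∈ uIcc a b, HasDerivWithinAt f' (f'' u) (uIcc a b) u)
    (hint : IntervalIntegrable f'' volume a b) :
    (1 / (b - a)) * (∫ u in a..b, f u) - f x + (x - (a + b) / 2) * f' x =
      ((∫ u in a..x, (u - a) ^ 2 * f'' u) - ∫ u in b..x, (u - b) ^ 2 * f'' u) /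
        (2 * (b - a)) := by
  have hax : uIcc a x ⊆ uIcc a b := uIcc_subset_uIcc_left hx
  have hbx : uIcc b x ⊆ uIcc a b := uIcc_subset_uIcc right_mem_uIcc hx
  have hf_int : IntervalIntegrable f volume a b :=
    ContinuousOn.intervalIntegrable fun u hu => (hf u hu).continuousWithinAt
  have hsplit : ∫ u in a..b, f u = (∫ u in a..x, f u) - ∫ u in b..x, f u := by
    rw [integral_symm x b, sub_neg_eq_add, integral_add_adjacent_intervals
      (hf_int.mono_set hax) (hf_int.mono_set hbx).symm]
  rw [hsplit,
    integral_sub_sq_mul_deriv2_eq (fun u hu => (hf u (hax hu)).mono hax)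
      (fun u hu => (hf' u (hax hu)).mono hax) (hint.mono_set hax),
    integral_sub_sq_mul_deriv2_eq (fun u hu => (hf u (hbx hu)).mono hbx)
      (fun u hu => (hf' u (hbx hu)).mono hbx) (hint.mono_set hbx)]
  have hba : b - a ≠ 0 := sub_ne_zero.2 hab.symm
  field_simp
  ring

end PeanoKernel

theorem stmt4_general {f f' f'' : ℝ → ℝ} {a b : ℝ} (hab : a < b)
    (hf : ∀ u ∈ Icc a b, HasDerivWithinAt f (f' u) (Icc a b) u)
    (hf' : ∀ u ∈ Icc a b, HasDerivWithinAt f' (f'' u) (Icc a b) u)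
    (hint : IntervalIntegrable f'' volume a b)
    {p q : ℝ} (hpq : p.HolderConjugate q) {s : ℝ} (hs : -1 < s)
    (hconv : SConvexOn s (Icc a b) fun u => |f'' u| ^ q) {x : ℝ} (hx : x ∈ Icc a b) :
    |(1 / (b - a)) * (∫ u in a..b, f u) - f x + (x - (a + b) / 2) * f' x|
      ≤ (x - a) ^ 3 / (2 * (b - a)) * (1 / (2 * p + 1)) ^ (1 / p) *
          ((|f'' x| ^ q + |f'' a| ^ q) / (s + 1)) ^ (1 / q)
        + (b - x) ^ 3 / (2 * (b - a)) * (1 / (2 * p + 1)) ^ (1 / p) *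
          ((|f'' x| ^ q + |f'' b| ^ q) / (s + 1)) ^ (1 / q) := by
  have hba : 0 < 2 * (b - a) := by linarith
  have hIcc : uIcc a b = Icc a b := uIcc_of_le hab.le
  rw [← hIcc] at hf hf' hconv
  have hxu : x ∈ uIcc a b := hIcc ▸ hx
  have hleft := abs_integral_pow_sub_mul_le_of_sConvexOn hpq 2 hs left_mem_uIcc hxu
    (hint.mono_set (uIcc_subset_uIcc_left hxu)) hconv
  have hright := abs_integral_pow_sub_mul_le_of_sConvexOn hpq 2 hs right_mem_uIcc hxu
    (hint.mono_set (uIcc_subset_uIcc right_mem_uIcc hxu)) hconv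
  rw [abs_of_nonneg (sub_nonneg.2 hx.1)] at hleft
  rw [abs_sub_comm x b, abs_of_nonneg (sub_nonneg.2 hx.2)] at hright
  rw [average_sub_add_eq_integral_peanoKernel hab.ne hxu hf hf' hint, abs_div, abs_of_pos hba]
  refine (div_le_div_of_nonneg_right ((abs_sub _ _).trans (add_le_add hleft hright))
    hba.le).trans_eq ?_
  push_cast
  ring

theorem stmt4 (I : Set ℝ) (hI : Convex ℝ I) (hI0 : I ⊆ Set.Ici (0:ℝ)) (f f' f'' : ℝ → ℝ) (a b : ℝ)
    (ha : a ∈ interior I) (hb : b ∈ interior I) (hab : a < b)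
    (hf' : ∀ y ∈ interior I, HasDerivAt f (f' y) y)
    (hf'' : ∀ y ∈ interior I, HasDerivAt f' (f'' y) y)
    (hfint : IntervalIntegrable f'' MeasureTheory.volume a b)
    (p q : ℝ) (hp : 1 < p) (hq : 1 < q) (hpq : 1 / p + 1 / q = 1)
    (s : ℝ) (hs : s ∈ Set.Ioc (0:ℝ) 1)
    (hconv : ∀ u ∈ Set.Icc a b, ∀ v ∈ Set.Icc a b, ∀ t ∈ Set.Icc (0:ℝ) 1,
      |f'' (t * u + (1 - t) * v)| ^ q ≤ t ^ s * |f'' u| ^ q + (1 - t) ^ s * |f'' v| ^ q) :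
    ∀ x ∈ Set.Icc a b,
      |(1 / (b - a)) * (∫ u in a..b, f u) - f x + (x - (a + b) / 2) * f' x|
        ≤ (x - a) ^ 3 / (2 * (b - a)) * (1 / (2 * p + 1)) ^ (1 / p) *
            ((|f'' x| ^ q + |f'' a| ^ q) / (s + 1)) ^ (1 / q)
          + (b - x) ^ 3 / (2 * (b - a)) * (1 / (2 * p + 1)) ^ (1 / p) *
            ((|f'' x| ^ q + |f'' b| ^ q) / (s + 1)) ^ (1 / q) := by
  have hsub : Icc a b ⊆ interior I := hI.interior.ordConnected.out ha hb
  exact fun x hx => stmt4_general hab (fun u hu => (hf' u (hsub hu)).hasDerivWithinAt)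
    (fun u hu => (hf'' u (hsub hu)).hasDerivWithinAt) hfint
    (Real.holderConjugate_iff.2 ⟨hp, by simpa using hpq⟩) (by linarith [hs.1])
    (fun u hu v hv t ht => hconv u hu v hv t (Ioo_subset_Icc_self ht)) hx
end

section
/- Let $f : I \subset [0,\infty) \to \mathbb{R}$ be twice differentiable on the interior $I^\circ$ of $I$ with $f''$ integrable on $[a,b]$, where $a, b \in I^\circ$ and $a < b$. Let $p, q > 1$ with $\frac{1}{p} + \frac{1}{q} = 1$, suppose $|f''|^q$ is $s$-convex in the second sense on $[a,b]$ for some fixed $s \in (0,1]$, and suppose $M > 0$ satisfies $|f''(u)| \le M$ for all $u \in [a,b]$. Then $\left| \frac{1}{b-a}\int_a^b f(u)\,du - f\!\left(\frac{a+b}{2}\right) \right| \le \frac{(b-a)^2}{8(2p+1)^{1/p}} \left(\frac{2}{s+1}\right)^{1/q} M$. -/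
open MeasureTheory Set intervalIntegral

/-! Write `m = (a + b) / 2`. The linear term of the Taylor expansion of `f` at `m` integrates to
zero over `[a, b]`, and a bound `M` on `f''` bounds the remainder by `M (x - m) ^ 2 / 2`;
integrating this gives the error `M (b - a) ^ 2 / 24` for the midpoint rule. The constant `1 / 24`
is at most the one coming from Hölder's inequality, because `(2 p + 1) ^ (1 / p) ≤ 3` by
Bernoulli's inequality and `1 ≤ 2 / (s + 1)`. -/

section Taylor

variable {E F : Type*} [NormedAddCommGroup E] [NormedSpace ℝ E]
  [NormedAddCommGroup F] [NormedSpace ℝ F]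

theorem norm_sub_sub_fderiv_le_of_norm_fderiv_sub_le {f : E → F} {f' : E → E →L[ℝ] F} {s : Set E}
    {K : ℝ} {x y : E} (hs : Convex ℝ s) (hf : ∀ z ∈ s, HasFDerivWithinAt f (f' z) s z)
    (hf' : ∀ z ∈ s, ‖f' z - f' x‖ ≤ K * ‖z - x‖) (hx : x ∈ s) (hy : y ∈ s) :
    ‖f y - f x - f' x (y - x)‖ ≤ K / 2 * ‖y - x‖ ^ 2 := by
  let γ : ℝ → E := AffineMap.lineMap x y
  have hγ : MapsTo γ (Icc 0 1) s := fun t ht ↦ hs.lineMap_mem hx hy ht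
  let φ : ℝ → F := fun t ↦ f (γ t) - f x - t • f' x (y - x)
  have hφ : ∀ t ∈ Icc (0 : ℝ) 1,
      HasDerivWithinAt φ ((f' (γ t) - f' x) (y - x)) (Icc 0 1) t := fun t ht ↦ by
    have hfγ := (hf _ (hγ ht)).comp_hasDerivWithinAt t AffineMap.hasDerivWithinAt_lineMap hγ
    have hlin := (hasDerivWithinAt_id t (Icc 0 1)).smul_const (f' x (y - x))
    exact ((hfγ.sub_const (f x)).sub hlin).congr_deriv (by rw [one_smul]; rfl)
  have hφ_bound : ∀ t ∈ Ico (0 : ℝ) 1,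
      ‖(f' (γ t) - f' x) (y - x)‖ ≤ K * ‖y - x‖ ^ 2 * t := fun t ht ↦ by
    have hγx : ‖γ t - x‖ = t * ‖y - x‖ := by
      simp [γ, AffineMap.lineMap_apply, norm_smul, abs_of_nonneg ht.1]
    calc ‖(f' (γ t) - f' x) (y - x)‖ ≤ ‖f' (γ t) - f' x‖ * ‖y - x‖ :=
          ContinuousLinearMap.le_opNorm _ _
      _ ≤ K * ‖γ t - x‖ * ‖y - x‖ := by gcongr; exact hf' _ (hγ (Ico_subset_Icc_self ht))
      _ = K * ‖y - x‖ ^ 2 * t := by rw [hγx]; ring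
  have hB (t : ℝ) : HasDerivAt (fun t ↦ K / 2 * ‖y - x‖ ^ 2 * t ^ 2) (K * ‖y - x‖ ^ 2 * t) t :=
    ((hasDerivAt_pow 2 t).const_mul _).congr_deriv (by push_cast; ring)
  have := image_norm_le_of_norm_deriv_right_le_deriv_boundary
    (fun t ht ↦ (hφ t ht).continuousWithinAt)
    (fun t ht ↦ (hφ t (Ico_subset_Icc_self ht)).mono_of_mem_nhdsWithin (Icc_mem_nhdsGE_of_mem ht))
    (by simp [φ, γ]) hB hφ_bound (right_mem_Icc.2 zero_le_one)
  simpa [φ, γ] using this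

theorem norm_sub_sub_smul_deriv_le_of_norm_deriv2_le {f f' f'' : ℝ → E} {s : Set ℝ} {M x y : ℝ}
    (hs : Convex ℝ s) (hf : ∀ z ∈ s, HasDerivWithinAt f (f' z) s z)
    (hf' : ∀ z ∈ s, HasDerivWithinAt f' (f'' z) s z) (hM : ∀ z ∈ s, ‖f'' z‖ ≤ M)
    (hx : x ∈ s) (hy : y ∈ s) :
    ‖f y - f x - (y - x) • f' x‖ ≤ M / 2 * (y - x) ^ 2 := by
  have hlip : ∀ z ∈ s, ‖ContinuousLinearMap.toSpanSingleton ℝ (f' z) -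
      ContinuousLinearMap.toSpanSingleton ℝ (f' x)‖ ≤ M * ‖z - x‖ := fun z hz ↦ by
    have hsub : ContinuousLinearMap.toSpanSingleton ℝ (f' z) -
        ContinuousLinearMap.toSpanSingleton ℝ (f' x) =
        ContinuousLinearMap.toSpanSingleton ℝ (f' z - f' x) := by ext; simp
    rw [hsub, ContinuousLinearMap.norm_toSpanSingleton]
    exact hs.norm_image_sub_le_of_norm_hasDerivWithin_le hf' hM hx hz
  simpa using norm_sub_sub_fderiv_le_of_norm_fderiv_sub_le hs
    (fun z hz ↦ (hf z hz).hasFDerivWithinAt) hlip hx hy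

end Taylor

section MidpointRule

theorem integral_sub_midpoint (a b : ℝ) : ∫ x in a..b, (x - (a + b) / 2) = 0 := by
  rw [integral_comp_sub_right (fun x ↦ x), integral_id]
  ring

theorem integral_sub_midpoint_sq (a b : ℝ) :
    ∫ x in a..b, (x - (a + b) / 2) ^ 2 = (b - a) ^ 3 / 12 := by
  rw [integral_comp_sub_right (fun x ↦ x ^ 2), integral_pow]
  push_cast
  ring

variable {E : Type*} [NormedAddCommGroup E] [NormedSpace ℝ E] [CompleteSpace E]

theorem norm_integral_sub_smul_le_of_norm_sub_affine_le {f : ℝ → E} {v w : E} {a b K : ℝ}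
    (hab : a ≤ b) (hf : IntervalIntegrable f volume a b)
    (h : ∀ x ∈ Icc a b, ‖f x - w - (x - (a + b) / 2) • v‖ ≤ K * (x - (a + b) / 2) ^ 2) :
    ‖(∫ x in a..b, f x) - (b - a) • w‖ ≤ K * ((b - a) ^ 3 / 12) := by
  have hlin : IntervalIntegrable (fun x ↦ (x - (a + b) / 2) • v) volume a b :=
    Continuous.intervalIntegrable (by fun_prop) _ _
  have hquad : IntervalIntegrable (fun x ↦ K * (x - (a + b) / 2) ^ 2) volume a b :=
    Continuous.intervalIntegrable (by fun_prop) _ _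
  calc ‖(∫ x in a..b, f x) - (b - a) • w‖
      = ‖∫ x in a..b, (f x - w - (x - (a + b) / 2) • v)‖ := by
        rw [integral_sub (hf.sub intervalIntegrable_const) hlin,
          integral_sub hf intervalIntegrable_const, intervalIntegral.integral_const,
          intervalIntegral.integral_smul_const, integral_sub_midpoint, zero_smul, sub_zero]
    _ ≤ ∫ x in a..b, K * (x - (a + b) / 2) ^ 2 :=
        intervalIntegral.norm_integral_le_of_norm_le hab
          (.of_forall fun x hx ↦ h x (Ioc_subset_Icc_self hx)) hquad
    _ = K * ((b - a) ^ 3 / 12) := by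
        rw [intervalIntegral.integral_const_mul, integral_sub_midpoint_sq]

theorem norm_smul_integral_sub_midpoint_le_of_norm_deriv2_le {f f' f'' : ℝ → E} {a b M : ℝ}
    (hab : a < b) (hf : ∀ x ∈ Icc a b, HasDerivWithinAt f (f' x) (Icc a b) x)
    (hf' : ∀ x ∈ Icc a b, HasDerivWithinAt f' (f'' x) (Icc a b) x)
    (hM : ∀ x ∈ Icc a b, ‖f'' x‖ ≤ M) :
    ‖(1 / (b - a)) • (∫ x in a..b, f x) - f ((a + b) / 2)‖ ≤ (b - a) ^ 2 / 24 * M := by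
  have hba : 0 < b - a := sub_pos.2 hab
  have hmid : (a + b) / 2 ∈ Icc a b := ⟨by linarith, by linarith⟩
  have hfi : IntervalIntegrable f volume a b :=
    ContinuousOn.intervalIntegrable_of_Icc hab.le fun x hx ↦ (hf x hx).continuousWithinAt
  calc ‖(1 / (b - a)) • (∫ x in a..b, f x) - f ((a + b) / 2)‖
      = 1 / (b - a) * ‖(∫ x in a..b, f x) - (b - a) • f ((a + b) / 2)‖ := by
        rw [← norm_smul_of_nonneg (by positivity), smul_sub, smul_smul,
          one_div_mul_cancel hba.ne', one_smul]
    _ ≤ 1 / (b - a) * (M / 2 * ((b - a) ^ 3 / 12)) := by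
        gcongr
        exact norm_integral_sub_smul_le_of_norm_sub_affine_le hab.le hfi fun x hx ↦
          norm_sub_sub_smul_deriv_le_of_norm_deriv2_le (convex_Icc a b) hf hf' hM hmid hx
    _ = (b - a) ^ 2 / 24 * M := by field_simp; ring

end MidpointRule

theorem one_add_mul_rpow_one_div_le {p x : ℝ} (hp : 1 ≤ p) (hx : 0 ≤ 1 + p * x) :
    (1 + p * x) ^ (1 / p) ≤ 1 + x := by
  have hp₀ : 0 < p := by linarith
  have hx' : -1 ≤ x := by nlinarith
  rw [one_div, Real.rpow_inv_le_iff_of_pos hx (by linarith) hp₀]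
  exact one_add_mul_self_le_rpow_one_add hx' hp

theorem stmt6_general {E : Type*} [NormedAddCommGroup E] [NormedSpace ℝ E] [CompleteSpace E]
    {f f' f'' : ℝ → E} {a b p q s M : ℝ} (hab : a < b)
    (hf : ∀ x ∈ Icc a b, HasDerivWithinAt f (f' x) (Icc a b) x)
    (hf' : ∀ x ∈ Icc a b, HasDerivWithinAt f' (f'' x) (Icc a b) x)
    (hp : 1 ≤ p) (hq : 0 < q) (hs : s ∈ Ioc (-1) 1) (hM : ∀ x ∈ Icc a b, ‖f'' x‖ ≤ M) :
    ‖(1 / (b - a)) • (∫ x in a..b, f x) - f ((a + b) / 2)‖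
      ≤ (b - a) ^ 2 / (8 * (2 * p + 1) ^ (1 / p)) * (2 / (s + 1)) ^ (1 / q) * M := by
  have hM₀ : 0 ≤ M := (norm_nonneg _).trans (hM a (left_mem_Icc.2 hab.le))
  have hp_const : (2 * p + 1) ^ (1 / p) ≤ 3 := by
    have := one_add_mul_rpow_one_div_le (x := 2) hp (by linarith)
    norm_num at this
    rwa [one_div, add_comm, mul_comm]
  have hs_const : 1 ≤ (2 / (s + 1)) ^ (1 / q) := by
    refine Real.one_le_rpow ?_ (by positivity)
    rw [one_le_div] <;> linarith [hs.1, hs.2]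
  calc ‖(1 / (b - a)) • (∫ x in a..b, f x) - f ((a + b) / 2)‖
      ≤ (b - a) ^ 2 / (8 * 3) * 1 * M := by
        convert norm_smul_integral_sub_midpoint_le_of_norm_deriv2_le hab hf hf' hM using 2
        norm_num
    _ ≤ (b - a) ^ 2 / (8 * (2 * p + 1) ^ (1 / p)) * (2 / (s + 1)) ^ (1 / q) * M := by
        gcongr

theorem stmt6 (I : Set ℝ) (hI : Convex ℝ I) (hI0 : I ⊆ Set.Ici (0:ℝ)) (f f' f'' : ℝ → ℝ) (a b : ℝ)
    (ha : a ∈ interior I) (hb : b ∈ interior I) (hab : a < b)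
    (hf' : ∀ y ∈ interior I, HasDerivAt f (f' y) y)
    (hf'' : ∀ y ∈ interior I, HasDerivAt f' (f'' y) y)
    (hfint : IntervalIntegrable f'' MeasureTheory.volume a b)
    (p q : ℝ) (hp : 1 < p) (hq : 1 < q) (hpq : 1 / p + 1 / q = 1)
    (s : ℝ) (hs : s ∈ Set.Ioc (0:ℝ) 1)
    (hconv : ∀ u ∈ Set.Icc a b, ∀ v ∈ Set.Icc a b, ∀ t ∈ Set.Icc (0:ℝ) 1,
      |f'' (t * u + (1 - t) * v)| ^ q ≤ t ^ s * |f'' u| ^ q + (1 - t) ^ s * |f'' v| ^ q)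
    (M : ℝ) (hM : 0 < M) (hbd : ∀ u ∈ Set.Icc a b, |f'' u| ≤ M) :
    |(1 / (b - a)) * (∫ u in a..b, f u) - f ((a + b) / 2)|
      ≤ (b - a) ^ 2 / (8 * (2 * p + 1) ^ (1 / p)) * (2 / (s + 1)) ^ (1 / q) * M := by
  have hsub : Icc a b ⊆ interior I := hI.interior.ordConnected.out ha hb
  exact stmt6_general hab (fun x hx ↦ (hf' x (hsub hx)).hasDerivWithinAt)
    (fun x hx ↦ (hf'' x (hsub hx)).hasDerivWithinAt) hp.le (by linarith)
    ⟨by linarith [hs.1], hs.2⟩ hbd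
end

section
/- Let $f : I \subset [0,\infty) \to \mathbb{R}$ be twice differentiable on the interior $I^\circ$ of $I$ with $f''$ integrable on $[a,b]$, where $a, b \in I^\circ$ and $a < b$. Let $p, q > 1$ with $\frac{1}{p} + \frac{1}{q} = 1$, suppose $|f''|^q$ is $s$-convex in the second sense on $[a,b]$ for some fixed $s \in (0,1]$, and suppose $M > 0$ satisfies $|f''(u)| \le M$ for all $u \in [a,b]$. Then the perturbed trapezoid inequality holds: $\left| \int_a^b f(u)\,du - \frac{b-a}{2}\big[f(a) + f(b)\big] + \frac{(b-a)^2}{4}\big(f'(b) - f'(a)\big) \right| \le \frac{(b-a)^3}{2(2p+1)^{1/p}} \left(\frac{2}{s+1}\right)^{1/q} M$. -/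
open MeasureTheory Set intervalIntegral

/-!
The kernel `K u = ((u - a) ^ 2 + (b - u) ^ 2) / 4` has `K'' = 1`, equal endpoint values
`(b - a) ^ 2 / 4` and opposite endpoint slopes `± (b - a) / 2`. Integrating `K • f''` by parts twice
therefore gives exactly the error of the perturbed trapezoid rule, so a bound `M` on `f''` bounds
this error by `M * ∫ K = M * (b - a) ^ 3 / 6`. The factor `1 / 6` is at most the constant built from
`p`, `q` and `s`, because Bernoulli's inequality gives `2 * p + 1 ≤ 3 ^ p`, while `2 / (s + 1) ≥ 1`.
-/

open scoped Interval

section Calculus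

variable {E : Type*} [NormedAddCommGroup E] [NormedSpace ℝ E] [CompleteSpace E] {a b : ℝ}

theorem intervalIntegrable_of_hasDerivAt_of_norm_le {g g' : ℝ → E} {M : ℝ}
    (hg : ∀ x ∈ Ι a b, HasDerivAt g (g' x) x) (hM : ∀ x ∈ Ι a b, ‖g' x‖ ≤ M) :
    IntervalIntegrable g' volume a b := by
  have hderiv : deriv g =ᵐ[volume.restrict (Ι a b)] g' :=
    ae_restrict_of_forall_mem measurableSet_uIoc fun x hx ↦ (hg x hx).deriv
  exact intervalIntegrable_iff.2 <| IntegrableOn.of_bound measure_Ioc_lt_top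
    ((aestronglyMeasurable_deriv g _).congr hderiv) M
    (ae_restrict_of_forall_mem measurableSet_uIoc hM)

theorem integral_smul_deriv_deriv_eq {𝕜 : Type*} [NontriviallyNormedField 𝕜] [NormedAlgebra ℝ 𝕜]
    [NormedSpace 𝕜 E] [IsScalarTower ℝ 𝕜 E] {k k' k'' : ℝ → 𝕜} {f f' f'' : ℝ → E}
    (hk : ∀ x ∈ [[a, b]], HasDerivAt k (k' x) x) (hk' : ∀ x ∈ [[a, b]], HasDerivAt k' (k'' x) x)
    (hf : ∀ x ∈ [[a, b]], HasDerivAt f (f' x) x) (hf' : ∀ x ∈ [[a, b]], HasDerivAt f' (f'' x) x)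
    (hk'' : IntervalIntegrable k'' volume a b) (hf'' : IntervalIntegrable f'' volume a b) :
    ∫ x in a..b, k x • f'' x =
      k b • f' b - k a • f' a - (k' b • f b - k' a • f a) + ∫ x in a..b, k'' x • f x := by
  have hk'_int : IntervalIntegrable k' volume a b :=
    (HasDerivAt.continuousOn hk').intervalIntegrable
  have hf'_int : IntervalIntegrable f' volume a b :=
    (HasDerivAt.continuousOn hf').intervalIntegrable
  rw [integral_smul_deriv_eq_deriv_smul hk hf' hk'_int hf'',
    integral_smul_deriv_eq_deriv_smul hk' hf hk'' hf'_int]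
  abel

end Calculus

/-- The Peano kernel of the perturbed trapezoid rule on `[a, b]`: the error of the rule is the
integral of this kernel against the second derivative of the integrand. -/
noncomputable def perturbedTrapezoidKernel (a b u : ℝ) : ℝ := ((u - a) ^ 2 + (b - u) ^ 2) / 4

namespace perturbedTrapezoidKernel

variable (a b u : ℝ)

theorem nonneg : 0 ≤ perturbedTrapezoidKernel a b u := by
  unfold perturbedTrapezoidKernel
  positivity

theorem apply_left : perturbedTrapezoidKernel a b a = (b - a) ^ 2 / 4 := by
  simp [perturbedTrapezoidKernel]

theorem apply_right : perturbedTrapezoidKernel a b b = (b - a) ^ 2 / 4 := by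
  simp [perturbedTrapezoidKernel]

theorem hasDerivAt : HasDerivAt (perturbedTrapezoidKernel a b) (u - (a + b) / 2) u := by
  have hleft : HasDerivAt (fun u : ℝ ↦ u - a) 1 u := (hasDerivAt_id u).sub_const a
  have hright : HasDerivAt (fun u : ℝ ↦ b - u) (-1) u := (hasDerivAt_id u).const_sub b
  refine (((hleft.pow 2).add (hright.pow 2)).div_const 4).congr_deriv ?_
  push_cast
  ring

theorem continuous : Continuous (perturbedTrapezoidKernel a b) :=
  continuous_iff_continuousAt.2 fun u ↦ (hasDerivAt a b u).continuousAt

theorem integral_eq : ∫ u in a..b, perturbedTrapezoidKernel a b u = (b - a) ^ 3 / 6 := by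
  have hleft : ∫ u in a..b, (u - a) ^ 2 = (b - a) ^ 3 / 3 := by
    rw [integral_comp_sub_right (fun x ↦ x ^ 2), integral_pow]
    norm_num
  have hright : ∫ u in a..b, (b - u) ^ 2 = (b - a) ^ 3 / 3 := by
    rw [integral_comp_sub_left (fun x ↦ x ^ 2), integral_pow]
    norm_num
  unfold perturbedTrapezoidKernel
  rw [intervalIntegral.integral_div, intervalIntegral.integral_add
    (Continuous.intervalIntegrable (by fun_prop) a b)
    (Continuous.intervalIntegrable (by fun_prop) a b), hleft, hright]
  ring

end perturbedTrapezoidKernel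

section PerturbedTrapezoid

variable {E : Type*} [NormedAddCommGroup E] [NormedSpace ℝ E]
  {f f' f'' : ℝ → E} {a b M : ℝ}

theorem norm_integral_perturbedTrapezoidKernel_smul_le {g : ℝ → E} (hab : a ≤ b)
    (hg : ∀ u ∈ Ioc a b, ‖g u‖ ≤ M) :
    ‖∫ u in a..b, perturbedTrapezoidKernel a b u • g u‖ ≤ (b - a) ^ 3 / 6 * M := by
  rw [← perturbedTrapezoidKernel.integral_eq, ← intervalIntegral.integral_mul_const]
  refine norm_integral_le_of_norm_le hab (.of_forall fun u hu ↦ ?_)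
    (((perturbedTrapezoidKernel.continuous a b).mul_const M).intervalIntegrable a b)
  rw [norm_smul, Real.norm_of_nonneg (perturbedTrapezoidKernel.nonneg a b u)]
  exact mul_le_mul_of_nonneg_left (hg u hu) (perturbedTrapezoidKernel.nonneg a b u)

variable [CompleteSpace E]

theorem integral_perturbedTrapezoidKernel_smul
    (hf : ∀ x ∈ [[a, b]], HasDerivAt f (f' x) x) (hf' : ∀ x ∈ [[a, b]], HasDerivAt f' (f'' x) x)
    (hf'' : IntervalIntegrable f'' volume a b) :
    ∫ u in a..b, perturbedTrapezoidKernel a b u • f'' u =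
      (∫ u in a..b, f u) - ((b - a) / 2) • (f a + f b) + ((b - a) ^ 2 / 4) • (f' b - f' a) := by
  have hkernel' (x : ℝ) : HasDerivAt (fun u ↦ u - (a + b) / 2) 1 x :=
    (hasDerivAt_id x).sub_const _
  rw [integral_smul_deriv_deriv_eq (fun x _ ↦ perturbedTrapezoidKernel.hasDerivAt a b x)
    (fun x _ ↦ hkernel' x) hf hf' intervalIntegrable_const hf'',
    perturbedTrapezoidKernel.apply_left, perturbedTrapezoidKernel.apply_right]
  simp only [one_smul]
  module

theorem stmt7_general (hab : a ≤ b) (hf : ∀ x ∈ Icc a b, HasDerivAt f (f' x) x)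
    (hf' : ∀ x ∈ Icc a b, HasDerivAt f' (f'' x) x) (hM : ∀ x ∈ Icc a b, ‖f'' x‖ ≤ M) :
    ‖(∫ u in a..b, f u) - ((b - a) / 2) • (f a + f b) + ((b - a) ^ 2 / 4) • (f' b - f' a)‖ ≤
      (b - a) ^ 3 / 6 * M := by
  rw [← uIcc_of_le hab] at hf hf' hM
  have hf'' : IntervalIntegrable f'' volume a b :=
    intervalIntegrable_of_hasDerivAt_of_norm_le (fun x hx ↦ hf' x (uIoc_subset_uIcc hx))
      fun x hx ↦ hM x (uIoc_subset_uIcc hx)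
  rw [← integral_perturbedTrapezoidKernel_smul hf hf' hf'']
  exact norm_integral_perturbedTrapezoidKernel_smul_le hab
    fun u hu ↦ hM u (Ioc_subset_Icc_self.trans Icc_subset_uIcc hu)

end PerturbedTrapezoid

section Constant

variable {p q s x c : ℝ}

theorem one_add_mul_rpow_inv_le_one_add (hx : -1 ≤ x) (hp : 1 ≤ p) (hpx : 0 ≤ 1 + p * x) :
    (1 + p * x) ^ p⁻¹ ≤ 1 + x :=
  (Real.rpow_inv_le_iff_of_pos hpx (by linarith) (by linarith)).2
    (one_add_mul_self_le_rpow_one_add hx hp)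

theorem div_six_le_div_rpow_mul_rpow (hc : 0 ≤ c) (hp : 1 ≤ p) (hq : 0 ≤ q)
    (hs : s ∈ Ioc (-1) 1) :
    c / 6 ≤ c / (2 * (2 * p + 1) ^ (1 / p)) * (2 / (s + 1)) ^ (1 / q) := by
  have hthree : (2 * p + 1) ^ (1 / p) ≤ 3 := by
    have h := one_add_mul_rpow_inv_le_one_add (x := 2) (by norm_num) hp (by linarith)
    convert h using 1 <;> ring_nf
  have hone : 1 ≤ (2 / (s + 1)) ^ (1 / q) := by
    refine Real.one_le_rpow ?_ (one_div_nonneg.2 hq)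
    rw [one_le_div₀ (by linarith [hs.1])]
    linarith [hs.2]
  calc
    c / 6 ≤ c / (2 * (2 * p + 1) ^ (1 / p)) :=
      div_le_div_of_nonneg_left hc (by positivity) (by linarith)
    _ ≤ _ := le_mul_of_one_le_right (by positivity) hone

end Constant

theorem stmt7 (I : Set ℝ) (hI : Convex ℝ I) (hI0 : I ⊆ Set.Ici (0:ℝ)) (f f' f'' : ℝ → ℝ) (a b : ℝ)
    (ha : a ∈ interior I) (hb : b ∈ interior I) (hab : a < b)
    (hf' : ∀ y ∈ interior I, HasDerivAt f (f' y) y)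
    (hf'' : ∀ y ∈ interior I, HasDerivAt f' (f'' y) y)
    (hfint : IntervalIntegrable f'' MeasureTheory.volume a b)
    (p q : ℝ) (hp : 1 < p) (hq : 1 < q) (hpq : 1 / p + 1 / q = 1)
    (s : ℝ) (hs : s ∈ Set.Ioc (0:ℝ) 1)
    (hconv : ∀ u ∈ Set.Icc a b, ∀ v ∈ Set.Icc a b, ∀ t ∈ Set.Icc (0:ℝ) 1,
      |f'' (t * u + (1 - t) * v)| ^ q ≤ t ^ s * |f'' u| ^ q + (1 - t) ^ s * |f'' v| ^ q)
    (M : ℝ) (hM : 0 < M) (hbd : ∀ u ∈ Set.Icc a b, |f'' u| ≤ M) :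
    |(∫ u in a..b, f u) - (b - a) / 2 * (f a + f b) + (b - a) ^ 2 / 4 * (f' b - f' a)|
      ≤ (b - a) ^ 3 / (2 * (2 * p + 1) ^ (1 / p)) * (2 / (s + 1)) ^ (1 / q) * M := by
  have hsub : Icc a b ⊆ interior I := hI.interior.ordConnected.out ha hb
  have hconst := div_six_le_div_rpow_mul_rpow (pow_nonneg (sub_nonneg.2 hab.le) 3) hp.le
    (zero_le_one.trans hq.le) (Ioc_subset_Ioc_left (by norm_num) hs)
  exact (stmt7_general hab.le (fun x hx ↦ hf' x (hsub hx)) (fun x hx ↦ hf'' x (hsub hx)) hbd).trans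
    (mul_le_mul_of_nonneg_right hconst hM.le)
end

section
/- Let $f : I \subset [0,\infty) \to \mathbb{R}$ be twice differentiable on the interior $I^\circ$ of $I$ with $f''$ integrable on $[a,b]$, where $a, b \in I^\circ$ and $a < b$. Let $q \ge 1$ and suppose $|f''|^q$ is $s$-convex in the second sense on $[a,b]$ for some fixed $s \in (0,1]$. Then for every $x \in [a,b]$: $\left| \frac{1}{b-a}\int_a^b f(u)\,du - f(x) + \left(x - \frac{a+b}{2}\right) f'(x) \right| \le \frac{(x-a)^3}{2(b-a)} \left(\frac{1}{3}\right)^{1 - 1/q} \left( \frac{|f''(x)|^q}{s+3} + \frac{2|f''(a)|^q}{(s+1)(s+2)(s+3)} \right)^{1/q} + \frac{(b-x)^3}{2(b-a)} \left(\frac{1}{3}\right)^{1 - 1/q} \left( \frac{|f''(x)|^q}{s+3} + \frac{2|f''(b)|^q}{(s+1)(s+2)(s+3)} \right)^{1/q}$. -/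
open MeasureTheory Set intervalIntegral

/-!
Integrating by parts twice,
`∫ u in c..x, (u - c) ^ 2 • f'' u = (x - c) ^ 2 • f' x - 2 (x - c) • f x + 2 ∫ u in c..x, f u`,
and the difference of these identities for `c = a` and `c = b` is `2 (b - a)` times the quantity to
be estimated. Rescaled to `[0, 1]`, each left-hand side is bounded by the power mean inequality with
weight `t ^ 2`, whose total mass is `1 / 3`; the convexity hypothesis majorizes `‖f''‖ ^ q` on the
segment, and the weighted integral of the majorant is a sum of two beta integrals.
-/

section PowerMean

variable {α E : Type*} [MeasurableSpace α] {μ : Measure α} {v w : α → ℝ} {p q : ℝ}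

theorem integrable_rpow_mul_rpow (hp : 0 ≤ p) (hq : 0 ≤ q) (hpq : p + q = 1)
    (hv₀ : 0 ≤ᵐ[μ] v) (hw₀ : 0 ≤ᵐ[μ] w) (hv : Integrable v μ) (hw : Integrable w μ) :
    Integrable (fun t ↦ v t ^ p * w t ^ q) μ := by
  refine ((hv.const_mul p).add (hw.const_mul q)).mono'
    ((hv.aemeasurable.pow_const p).mul (hw.aemeasurable.pow_const q)).aestronglyMeasurable ?_
  filter_upwards [hv₀, hw₀] with t hvt hwt
  rw [Real.norm_of_nonneg (mul_nonneg (Real.rpow_nonneg hvt p) (Real.rpow_nonneg hwt q))]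
  exact Real.geom_mean_le_arith_mean2_weighted hp hq hvt hwt hpq

theorem integral_rpow_mul_rpow_le (hp : 0 ≤ p) (hq : 0 ≤ q) (hpq : p + q = 1)
    (hv₀ : 0 ≤ᵐ[μ] v) (hw₀ : 0 ≤ᵐ[μ] w) (hv : Integrable v μ) (hw : Integrable w μ) :
    ∫ t, v t ^ p * w t ^ q ∂μ ≤ (∫ t, v t ∂μ) ^ p * (∫ t, w t ∂μ) ^ q := by
  have hvw₀ : 0 ≤ᵐ[μ] fun t ↦ v t ^ p * w t ^ q := by
    filter_upwards [hv₀, hw₀] with t hvt hwt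
    exact mul_nonneg (Real.rpow_nonneg hvt p) (Real.rpow_nonneg hwt q)
  have hofReal : ∫⁻ t, ENNReal.ofReal (v t ^ p * w t ^ q) ∂μ
      = ∫⁻ t, ENNReal.ofReal (v t) ^ p * ENNReal.ofReal (w t) ^ q ∂μ := by
    refine lintegral_congr_ae ?_
    filter_upwards [hv₀, hw₀] with t hvt hwt
    rw [ENNReal.ofReal_mul (Real.rpow_nonneg hvt p), ENNReal.ofReal_rpow_of_nonneg hvt hp,
      ENNReal.ofReal_rpow_of_nonneg hwt hq]
  rw [integral_eq_lintegral_of_nonneg_ae hvw₀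
      (integrable_rpow_mul_rpow hp hq hpq hv₀ hw₀ hv hw).aestronglyMeasurable,
    integral_eq_lintegral_of_nonneg_ae hv₀ hv.aestronglyMeasurable,
    integral_eq_lintegral_of_nonneg_ae hw₀ hw.aestronglyMeasurable, hofReal,
    ENNReal.toReal_rpow, ENNReal.toReal_rpow, ← ENNReal.toReal_mul]
  refine ENNReal.toReal_mono (ENNReal.mul_ne_top ?_ ?_) (ENNReal.lintegral_mul_norm_pow_le
    hv.aemeasurable.ennreal_ofReal hw.aemeasurable.ennreal_ofReal hp hq hpq)
  · exact ENNReal.rpow_ne_top_of_nonneg hp hv.lintegral_lt_top.ne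
  · exact ENNReal.rpow_ne_top_of_nonneg hq hw.lintegral_lt_top.ne

theorem norm_integral_smul_le_of_norm_rpow_le [NormedAddCommGroup E] [NormedSpace ℝ E]
    {g : α → E} {G : α → ℝ} (hq : 1 ≤ q) (hw₀ : 0 ≤ᵐ[μ] w) (hw : Integrable w μ)
    (hwG : Integrable (fun t ↦ w t * G t) μ) (hgG : ∀ᵐ t ∂μ, ‖g t‖ ^ q ≤ G t) :
    ‖∫ t, w t • g t ∂μ‖ ≤ (∫ t, w t ∂μ) ^ (1 - 1 / q) * (∫ t, w t * G t ∂μ) ^ (1 / q) := by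
  have hq₀ : 0 < q := one_pos.trans_le hq
  have hp : 0 ≤ 1 - 1 / q := sub_nonneg.2 ((div_le_one hq₀).2 hq)
  have hr : 0 ≤ 1 / q := by positivity
  have hpr : 1 - 1 / q + 1 / q = 1 := sub_add_cancel _ _
  have hwG₀ : 0 ≤ᵐ[μ] fun t ↦ w t * G t := by
    filter_upwards [hw₀, hgG] with t hwt hgt
    exact mul_nonneg hwt ((Real.rpow_nonneg (norm_nonneg _) q).trans hgt)
  refine (MeasureTheory.norm_integral_le_of_norm_le
    (integrable_rpow_mul_rpow hp hr hpr hw₀ hwG₀ hw hwG) ?_).trans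
    (integral_rpow_mul_rpow_le hp hr hpr hw₀ hwG₀ hw hwG)
  filter_upwards [hw₀, hgG] with t hwt hgt
  have hG : 0 ≤ G t := (Real.rpow_nonneg (norm_nonneg _) q).trans hgt
  calc ‖w t • g t‖ = w t * ‖g t‖ := by rw [norm_smul, Real.norm_of_nonneg hwt]
    _ ≤ w t * G t ^ (1 / q) := by
      gcongr
      rwa [one_div, Real.le_rpow_inv_iff_of_pos (norm_nonneg _) hG hq₀]
    _ = w t ^ (1 - 1 / q) * (w t * G t) ^ (1 / q) := by
      rw [Real.mul_rpow hwt hG, ← mul_assoc, ← Real.rpow_add_of_nonneg hwt hp hr, hpr,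
        Real.rpow_one]

end PowerMean

section UnitInterval

variable {s : ℝ}

theorem intervalIntegrable_pow_mul_rpow (n : ℕ) (hs : -1 < s) :
    IntervalIntegrable (fun t : ℝ ↦ t ^ n * t ^ s) volume 0 1 :=
  (intervalIntegrable_rpow' hs).continuousOn_mul (by fun_prop)

theorem intervalIntegrable_pow_mul_one_sub_rpow (n : ℕ) (hs : -1 < s) :
    IntervalIntegrable (fun t : ℝ ↦ t ^ n * (1 - t) ^ s) volume 0 1 := by
  have h : IntervalIntegrable (fun t : ℝ ↦ (1 - t) ^ s) volume 0 1 := by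
    simpa using ((intervalIntegrable_rpow' hs (a := 0) (b := 1)).comp_sub_left 1).symm
  exact h.continuousOn_mul (by fun_prop)

theorem integral_pow_mul_rpow (n : ℕ) (hs : -1 < s + n) :
    ∫ t in (0 : ℝ)..1, t ^ n * t ^ s = 1 / (s + n + 1) := by
  calc ∫ t in (0 : ℝ)..1, t ^ n * t ^ s = ∫ t in (0 : ℝ)..1, t ^ (s + n) := by
        refine integral_congr_Ioo_of_le zero_le_one fun t ht ↦ ?_
        simp only [Real.rpow_add_natCast ht.1.ne', mul_comm]
    _ = 1 / (s + n + 1) := by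
        rw [integral_rpow (Or.inl hs), Real.one_rpow, Real.zero_rpow (by linarith), sub_zero]

theorem integral_pow_mul_one_sub_rpow (n : ℕ) (hs : -1 < s) :
    ∫ t in (0 : ℝ)..1, t ^ n * (1 - t) ^ s
      = n.factorial / ∏ j ∈ Finset.range (n + 1), (s + 1 + j) := by
  have hbeta : ((∫ t in (0 : ℝ)..1, t ^ n * (1 - t) ^ s : ℝ) : ℂ)
      = Complex.betaIntegral (n + 1) (s + 1) := by
    rw [Complex.betaIntegral, ← intervalIntegral.integral_ofReal]
    refine integral_congr fun t ht ↦ ?_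
    rw [uIcc_of_le zero_le_one] at ht
    simp only [add_sub_cancel_right, Complex.cpow_natCast]
    rw [Complex.ofReal_mul, Complex.ofReal_pow, Complex.ofReal_cpow (sub_nonneg.2 ht.2)]
    norm_cast
  apply Complex.ofReal_injective
  rw [hbeta, Complex.betaIntegral_symm,
    Complex.betaIntegral_eval_nat_add_one_right (by simpa using by linarith)]
  norm_cast

theorem norm_integral_pow_smul_le_of_norm_rpow_le {E : Type*} [NormedAddCommGroup E]
    [NormedSpace ℝ E] {g : ℝ → E} {A B q : ℝ} (n : ℕ) (hs : -1 < s) (hq : 1 ≤ q)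
    (hg : ∀ t ∈ Ioo (0 : ℝ) 1, ‖g t‖ ^ q ≤ t ^ s * A + (1 - t) ^ s * B) :
    ‖∫ t in (0 : ℝ)..1, t ^ n • g t‖ ≤ (1 / (n + 1 : ℝ)) ^ (1 - 1 / q) *
      (A / (s + n + 1) +
        n.factorial * B / ∏ j ∈ Finset.range (n + 1), (s + 1 + j)) ^ (1 / q) := by
  have hsn : -1 < s + n := by linarith [n.cast_nonneg (α := ℝ)]
  have hA := (intervalIntegrable_pow_mul_rpow n hs).mul_const A
  have hB := (intervalIntegrable_pow_mul_one_sub_rpow n hs).mul_const B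
  have hsplit : (fun t : ℝ ↦ t ^ n * (t ^ s * A + (1 - t) ^ s * B))
      = fun t ↦ t ^ n * t ^ s * A + t ^ n * (1 - t) ^ s * B := by
    funext t; ring
  have hmajorant : ∫ t in (0 : ℝ)..1, t ^ n * (t ^ s * A + (1 - t) ^ s * B)
      = A / (s + n + 1) + n.factorial * B / ∏ j ∈ Finset.range (n + 1), (s + 1 + j) := by
    rw [hsplit, intervalIntegral.integral_add hA hB, intervalIntegral.integral_mul_const,
      intervalIntegral.integral_mul_const, integral_pow_mul_rpow n hsn,
      integral_pow_mul_one_sub_rpow n hs]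
    ring
  have hmass : ∫ t in (0 : ℝ)..1, t ^ n = 1 / (n + 1 : ℝ) := by simp
  have hpow : IntervalIntegrable (fun t : ℝ ↦ t ^ n) volume 0 1 :=
    (continuous_pow n).intervalIntegrable 0 1
  have hwG : IntervalIntegrable (fun t : ℝ ↦ t ^ n * (t ^ s * A + (1 - t) ^ s * B)) volume 0 1 :=
    hsplit ▸ hA.add hB
  rw [intervalIntegrable_iff_integrableOn_Ioo_of_le zero_le_one] at hpow hwG
  rw [← hmajorant, ← hmass]
  simp only [integral_of_le zero_le_one, integral_Ioc_eq_integral_Ioo]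
  exact norm_integral_smul_le_of_norm_rpow_le hq
    (ae_restrict_of_forall_mem measurableSet_Ioo fun t ht ↦ pow_nonneg ht.1.le n) hpow hwG
    (ae_restrict_of_forall_mem measurableSet_Ioo hg)

end UnitInterval

section TwiceDifferentiable

variable {E : Type*} [NormedAddCommGroup E] [NormedSpace ℝ E] {f f' f'' : ℝ → E}
  {a b c x q s : ℝ}

theorem integral_sub_pow_smul (n : ℕ) (g : ℝ → E) (c x : ℝ) :
    ∫ u in c..x, (u - c) ^ n • g u
      = (x - c) ^ (n + 1) • ∫ t in (0 : ℝ)..1, t ^ n • g (t * x + (1 - t) * c) := by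
  have h := smul_integral_comp_add_mul (a := 0) (b := 1) (fun u ↦ (u - c) ^ n • g u) (x - c) c
  rw [mul_zero, add_zero, mul_one, add_sub_cancel] at h
  have hpoint (t : ℝ) : (c + (x - c) * t - c) ^ n • g (c + (x - c) * t)
      = (x - c) ^ n • t ^ n • g (t * x + (1 - t) * c) := by
    rw [add_sub_cancel_left, mul_pow, mul_smul,
      show c + (x - c) * t = t * x + (1 - t) * c by ring]
  simp only [hpoint, intervalIntegral.integral_smul] at h
  rw [← h, pow_succ', mul_smul]

theorem integral_sub_sq_smul_eq [CompleteSpace E]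
    (hf : ∀ y ∈ uIcc c x, HasDerivWithinAt f (f' y) (uIcc c x) y)
    (hf' : ∀ y ∈ uIcc c x, HasDerivWithinAt f' (f'' y) (uIcc c x) y)
    (hint : IntervalIntegrable f'' volume c x) :
    ∫ u in c..x, (u - c) ^ 2 • f'' u
      = (x - c) ^ 2 • f' x - (2 * (x - c)) • f x + (2 : ℝ) • ∫ u in c..x, f u := by
  have hfc : ContinuousOn f (uIcc c x) := fun y hy ↦ (hf y hy).continuousWithinAt
  have hf'c : ContinuousOn f' (uIcc c x) := fun y hy ↦ (hf' y hy).continuousWithinAt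
  have hint₁ : IntervalIntegrable (fun u ↦ (u - c) ^ 2 • f'' u) volume c x :=
    hint.continuousOn_smul (by fun_prop)
  have hint₂ : IntervalIntegrable (fun u ↦ (2 : ℝ) • f u) volume c x :=
    (hfc.const_smul 2).intervalIntegrable
  have hderiv : ∀ y ∈ Ioo (min c x) (max c x),
      HasDerivAt (fun u ↦ (u - c) ^ 2 • f' u - (2 * (u - c)) • f u)
        ((y - c) ^ 2 • f'' y - (2 : ℝ) • f y) y := by
    intro y hy
    have hnhds : uIcc c x ∈ nhds y := Icc_mem_nhds hy.1 hy.2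
    have hy' : y ∈ uIcc c x := Ioo_subset_Icc_self hy
    have hlin : HasDerivAt (fun u : ℝ ↦ u - c) 1 y := (hasDerivAt_id y).sub_const c
    refine (((hlin.pow 2).smul ((hf' y hy').hasDerivAt hnhds)).sub
      ((hlin.const_mul 2).smul ((hf y hy').hasDerivAt hnhds))).congr_deriv ?_
    simp only [Nat.cast_ofNat, Pi.pow_apply]
    module
  have hftc := integral_eq_sub_of_hasDeriv_right (by fun_prop)
    (fun y hy ↦ (hderiv y hy).hasDerivWithinAt) (hint₁.sub hint₂)
  rw [intervalIntegral.integral_sub hint₁ hint₂, intervalIntegral.integral_smul] at hftc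
  rw [sub_eq_iff_eq_add.1 hftc]
  simp

theorem norm_sq_smul_sub_add_integral_le [CompleteSpace E]
    (hf : ∀ y ∈ uIcc c x, HasDerivWithinAt f (f' y) (uIcc c x) y)
    (hf' : ∀ y ∈ uIcc c x, HasDerivWithinAt f' (f'' y) (uIcc c x) y)
    (hint : IntervalIntegrable f'' volume c x) (hq : 1 ≤ q) (hs : -1 < s)
    (hconv : ∀ t ∈ Ioo (0 : ℝ) 1,
      ‖f'' (t * x + (1 - t) * c)‖ ^ q ≤ t ^ s * ‖f'' x‖ ^ q + (1 - t) ^ s * ‖f'' c‖ ^ q) :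
    ‖(x - c) ^ 2 • f' x - (2 * (x - c)) • f x + (2 : ℝ) • ∫ u in c..x, f u‖
      ≤ |x - c| ^ 3 * (((1 : ℝ) / 3) ^ (1 - 1 / q) *
        (‖f'' x‖ ^ q / (s + 3) + 2 * ‖f'' c‖ ^ q / ((s + 1) * (s + 2) * (s + 3))) ^ (1 / q)) := by
  rw [← integral_sub_sq_smul_eq hf hf' hint, integral_sub_pow_smul, norm_smul, norm_pow,
    Real.norm_eq_abs]
  gcongr
  have hmass : ((2 : ℕ) + 1 : ℝ) = 3 := by norm_num
  have hdenom : s + (2 : ℕ) + 1 = s + 3 := by push_cast; ring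
  have hprod : ∏ j ∈ Finset.range (2 + 1), (s + 1 + (j : ℝ)) = (s + 1) * (s + 2) * (s + 3) := by
    norm_num [Finset.prod_range_succ, add_assoc]
  have h := norm_integral_pow_smul_le_of_norm_rpow_le 2 hs hq hconv
  rwa [hmass, hdenom, hprod, Nat.factorial_two, Nat.cast_ofNat] at h

theorem smul_integral_sub_add_smul_eq_smul_sub (hab : a ≠ b)
    (hax : IntervalIntegrable f volume a x) (hbx : IntervalIntegrable f volume b x) (m : E) :
    (1 / (b - a)) • (∫ u in a..b, f u) - f x + (x - (a + b) / 2) • m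
      = (1 / (2 * (b - a))) •
        (((x - a) ^ 2 • m - (2 * (x - a)) • f x + (2 : ℝ) • ∫ u in a..x, f u)
          - ((x - b) ^ 2 • m - (2 * (x - b)) • f x + (2 : ℝ) • ∫ u in b..x, f u)) := by
  have hba : b - a ≠ 0 := sub_ne_zero.2 hab.symm
  rw [← integral_add_adjacent_intervals hax hbx.symm, integral_symm b x]
  match_scalars <;> field_simp <;> ring

end TwiceDifferentiable

theorem stmt8_general {E : Type*} [NormedAddCommGroup E] [NormedSpace ℝ E] [CompleteSpace E]
    {f f' f'' : ℝ → E} {a b x q s : ℝ} (hab : a < b) (hx : x ∈ Icc a b)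
    (hf : ∀ y ∈ Icc a b, HasDerivWithinAt f (f' y) (Icc a b) y)
    (hf' : ∀ y ∈ Icc a b, HasDerivWithinAt f' (f'' y) (Icc a b) y)
    (hint : IntervalIntegrable f'' volume a b) (hq : 1 ≤ q) (hs : -1 < s)
    (hconv : ∀ c ∈ ({a, b} : Set ℝ), ∀ t ∈ Ioo (0 : ℝ) 1,
      ‖f'' (t * x + (1 - t) * c)‖ ^ q ≤ t ^ s * ‖f'' x‖ ^ q + (1 - t) ^ s * ‖f'' c‖ ^ q) :
    ‖(1 / (b - a)) • (∫ u in a..b, f u) - f x + (x - (a + b) / 2) • f' x‖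
      ≤ (x - a) ^ 3 / (2 * (b - a)) * ((1 : ℝ) / 3) ^ (1 - 1 / q) *
          (‖f'' x‖ ^ q / (s + 3) + 2 * ‖f'' a‖ ^ q / ((s + 1) * (s + 2) * (s + 3))) ^ (1 / q)
        + (b - x) ^ 3 / (2 * (b - a)) * ((1 : ℝ) / 3) ^ (1 - 1 / q) *
          (‖f'' x‖ ^ q / (s + 3) + 2 * ‖f'' b‖ ^ q / ((s + 1) * (s + 2) * (s + 3))) ^ (1 / q) := by
  have hcoeff : 0 ≤ 1 / (2 * (b - a)) := one_div_nonneg.2 (by linarith)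
  have ha : a ∈ Icc a b := left_mem_Icc.2 hab.le
  have hb : b ∈ Icc a b := right_mem_Icc.2 hab.le
  have hsub {c : ℝ} (hc : c ∈ Icc a b) : uIcc c x ⊆ Icc a b := uIcc_subset_Icc hc hx
  have hfint {c : ℝ} (hc : c ∈ Icc a b) : IntervalIntegrable f volume c x :=
    ContinuousOn.intervalIntegrable fun y hy ↦
      ((hf y (hsub hc hy)).mono (hsub hc)).continuousWithinAt
  have hbound {c : ℝ} (hc : c ∈ Icc a b) (hc' : c ∈ ({a, b} : Set ℝ)) :=
    norm_sq_smul_sub_add_integral_le (fun y hy ↦ (hf y (hsub hc hy)).mono (hsub hc))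
      (fun y hy ↦ (hf' y (hsub hc hy)).mono (hsub hc))
      (hint.mono_set (by rw [uIcc_of_le hab.le]; exact hsub hc)) hq hs (hconv c hc')
  have hboundA := hbound ha (by simp)
  have hboundB := hbound hb (by simp)
  rw [abs_of_nonneg (sub_nonneg.2 hx.1)] at hboundA
  rw [abs_sub_comm, abs_of_nonneg (sub_nonneg.2 hx.2)] at hboundB
  rw [smul_integral_sub_add_smul_eq_smul_sub hab.ne (hfint ha) (hfint hb), norm_smul,
    Real.norm_of_nonneg hcoeff]
  refine (mul_le_mul_of_nonneg_left ((norm_sub_le _ _).trans (add_le_add hboundA hboundB))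
    hcoeff).trans_eq ?_
  ring

theorem stmt8 (I : Set ℝ) (hI : Convex ℝ I) (hI0 : I ⊆ Set.Ici (0:ℝ)) (f f' f'' : ℝ → ℝ) (a b : ℝ)
    (ha : a ∈ interior I) (hb : b ∈ interior I) (hab : a < b)
    (hf' : ∀ y ∈ interior I, HasDerivAt f (f' y) y)
    (hf'' : ∀ y ∈ interior I, HasDerivAt f' (f'' y) y)
    (hfint : IntervalIntegrable f'' MeasureTheory.volume a b)
    (q : ℝ) (hq : 1 ≤ q)
    (s : ℝ) (hs : s ∈ Set.Ioc (0:ℝ) 1)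
    (hconv : ∀ u ∈ Set.Icc a b, ∀ v ∈ Set.Icc a b, ∀ t ∈ Set.Icc (0:ℝ) 1,
      |f'' (t * u + (1 - t) * v)| ^ q ≤ t ^ s * |f'' u| ^ q + (1 - t) ^ s * |f'' v| ^ q) :
    ∀ x ∈ Set.Icc a b,
      |(1 / (b - a)) * (∫ u in a..b, f u) - f x + (x - (a + b) / 2) * f' x|
        ≤ (x - a) ^ 3 / (2 * (b - a)) * ((1:ℝ) / 3) ^ (1 - 1 / q) *
            (|f'' x| ^ q / (s + 3) + 2 * |f'' a| ^ q / ((s + 1) * (s + 2) * (s + 3))) ^ (1 / q)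
          + (b - x) ^ 3 / (2 * (b - a)) * ((1:ℝ) / 3) ^ (1 - 1 / q) *
            (|f'' x| ^ q / (s + 3) + 2 * |f'' b| ^ q / ((s + 1) * (s + 2) * (s + 3))) ^ (1 / q) := by
  have hsub : Icc a b ⊆ interior I := hI.interior.ordConnected.out ha hb
  have hab' : ({a, b} : Set ℝ) ⊆ Icc a b :=
    pair_subset (left_mem_Icc.2 hab.le) (right_mem_Icc.2 hab.le)
  exact fun x hx ↦ stmt8_general hab hx (fun y hy ↦ (hf' y (hsub hy)).hasDerivWithinAt)
    (fun y hy ↦ (hf'' y (hsub hy)).hasDerivWithinAt) hfint hq (by linarith [hs.1])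
    fun c hc t ht ↦ hconv x hx c (hab' hc) t (Ioo_subset_Icc_self ht)
end

section
/- Let $f : I \subset [0,\infty) \to \mathbb{R}$ be twice differentiable on the interior $I^\circ$ of $I$ with $f''$ integrable on $[a,b]$, where $a, b \in I^\circ$ and $a < b$. Let $p, q > 1$ with $\frac{1}{p} + \frac{1}{q} = 1$, and suppose $|f''|^q$ is $s$-concave in the second sense on $[a,b]$ for some fixed $s \in (0,1]$. Then $\left| \frac{1}{b-a}\int_a^b f(u)\,du - f\!\left(\frac{a+b}{2}\right) \right| \le \frac{2^{(s-1)/q}(b-a)^2}{16(2p+1)^{1/p}} \left[ \left| f''\!\left(\frac{3a+b}{4}\right)\right| + \left| f''\!\left(\frac{a+3b}{4}\right)\right| \right]$. -/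
open MeasureTheory Set intervalIntegral

/-!
With `m = (a + b) / 2`, integrating by parts twice on each half-interval gives
`2 * ((∫ u in a..b, f u) - (b - a) * f m) =
  (∫ u in a..m, (u - a) ^ 2 * f'' u) + ∫ u in m..b, (u - b) ^ 2 * f'' u`.
Hölder's inequality splits the kernel from `f''`, and pairing `u` with its reflection in the centre
of the half-interval bounds the mean of `|f''| ^ q` there by its value at that centre. Reading the
second half as an oriented integral from `b` to `m` makes it an instance of the same estimate as the
first.
-/

open scoped Interval ENNReal

/-- `s`-concavity in the second sense of `g` on `D`, the source of the midpoint inequality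
for `|f''| ^ q`. Neither `D ⊆ [0, ∞)` nor `s ∈ (0, 1]` is built into the notion. -/
def SConcaveOn (s : ℝ) (D : Set ℝ) (g : ℝ → ℝ) : Prop :=
  ∀ x ∈ D, ∀ y ∈ D, ∀ t ∈ Icc (0 : ℝ) 1,
    g (t * x + (1 - t) * y) ≥ t ^ s * g x + (1 - t) ^ s * g y

theorem SConcaveOn.add_le_two_rpow_mul_midpoint {s : ℝ} {D : Set ℝ} {g : ℝ → ℝ}
    (hg : SConcaveOn s D g) {x y : ℝ} (hx : x ∈ D) (hy : y ∈ D) :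
    g x + g y ≤ 2 ^ s * g ((x + y) / 2) := by
  have h_mid : (1 / 2 : ℝ) * x + (1 - 1 / 2) * y = (x + y) / 2 := by ring
  have h := hg x hx y hy (1 / 2) (by norm_num)
  rw [h_mid, sub_half, ← mul_add, one_div, Real.inv_rpow zero_le_two] at h
  exact (inv_mul_le_iff₀ (by positivity)).1 h

theorem two_rpow_mul_rpow_eq (s : ℝ) {q M : ℝ} (hq : q ≠ 0) (hM : 0 ≤ M) :
    2 ^ s * M ^ q = 2 * (2 ^ ((s - 1) / q) * M) ^ q := by
  rw [Real.mul_rpow (by positivity) hM, ← Real.rpow_mul zero_le_two, div_mul_cancel₀ _ hq,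
    Real.rpow_sub_one two_ne_zero]
  ring

theorem integral_uIoc_abs_sub_rpow {r : ℝ} (hr : -1 < r) (a b : ℝ) :
    ∫ u in Ι a b, |u - a| ^ r = |b - a| ^ (r + 1) / (r + 1) := by
  have h_power {c : ℝ} (hc : 0 ≤ c) : ∫ u in 0..c, |u| ^ r = c ^ (r + 1) / (r + 1) := by
    have h_abs : EqOn (fun u => |u| ^ r) (fun u => u ^ r) [[0, c]] := fun u hu =>
      congrArg (· ^ r) (abs_of_nonneg (uIcc_of_le hc ▸ hu).1)
    rw [integral_congr h_abs, integral_rpow (Or.inl hr), Real.zero_rpow (by linarith), sub_zero]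
  rcases le_total a b with hab | hba
  · rw [uIoc_of_le hab, ← integral_of_le hab,
      integral_comp_sub_right (fun u => |u| ^ r), sub_self, h_power (sub_nonneg.2 hab),
      abs_of_nonneg (sub_nonneg.2 hab)]
  · simp_rw [abs_sub_comm _ a]
    rw [uIoc_of_ge hba, ← integral_of_le hba,
      integral_comp_sub_left (fun u => |u| ^ r), sub_self, h_power (sub_nonneg.2 hba),
      abs_of_nonneg (sub_nonneg.2 hba)]

theorem integral_uIoc_le_of_symm_add_le {φ : ℝ → ℝ} {a b K : ℝ}
    (hφ : IntervalIntegrable φ volume a b)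
    (hK : ∀ u ∈ [[a, b]], φ u + φ (a + b - u) ≤ 2 * K) :
    ∫ u in Ι a b, φ u ≤ |b - a| * K := by
  wlog hab : a ≤ b generalizing a b
  · rw [uIoc_comm, abs_sub_comm]
    exact this hφ.symm (by simpa only [uIcc_comm, add_comm] using hK) (le_of_not_ge hab)
  have hφ_refl : IntervalIntegrable (fun u => φ (a + b - u)) volume a b := by
    simpa using (hφ.comp_sub_left (a + b)).symm
  have h_refl : ∫ u in a..b, φ (a + b - u) = ∫ u in a..b, φ u := by
    simp [integral_comp_sub_left φ (a + b)]
  have h_sum : ∫ u in a..b, (φ u + φ (a + b - u)) ≤ ∫ _ in a..b, 2 * K :=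
    integral_mono_on hab (hφ.add hφ_refl) intervalIntegrable_const (by rwa [uIcc_of_le hab] at hK)
  rw [integral_add hφ hφ_refl, h_refl, intervalIntegral.integral_const, smul_eq_mul] at h_sum
  rw [uIoc_of_le hab, ← integral_of_le hab, abs_of_nonneg (sub_nonneg.2 hab)]
  linarith

theorem memLp_uIoc_of_hasDerivWithinAt_of_bound {f f' : ℝ → ℝ} {a b C : ℝ} {r : ℝ≥0∞}
    (hf : ∀ u ∈ [[a, b]], HasDerivWithinAt f (f' u) [[a, b]] u)
    (hC : ∀ u ∈ [[a, b]], |f' u| ≤ C) :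
    MemLp f' r (volume.restrict (Ι a b)) := by
  have h_deriv : deriv f =ᵐ[volume.restrict (Ι a b)] f' := by
    rw [uIoc, ← restrict_Ioo_eq_restrict_Ioc]
    refine ae_restrict_of_forall_mem measurableSet_Ioo fun u hu => ?_
    exact ((hf u (Ioo_subset_Icc_self hu)).hasDerivAt (Icc_mem_nhds hu.1 hu.2)).deriv
  have h_bound : ∀ᵐ u ∂volume.restrict (Ι a b), ‖f' u‖ ≤ C :=
    ae_restrict_of_forall_mem measurableSet_uIoc fun u hu => hC u (uIoc_subset_uIcc hu)
  have : IsFiniteMeasure (volume.restrict (Ι a b)) := Real.isFiniteMeasure_restrict_Ioc _ _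
  exact .of_bound ((aestronglyMeasurable_deriv f _).congr h_deriv) C h_bound

section Holder

variable {g : ℝ → ℝ} {a b p q : ℝ}

theorem abs_integral_sub_pow_mul_le_Lp_mul_Lq (hpq : p.HolderConjugate q) (n : ℕ)
    (hg : MemLp g (ENNReal.ofReal q) (volume.restrict (Ι a b))) :
    |∫ u in a..b, (u - a) ^ n * g u| ≤
      (|b - a| ^ (n * p + 1) / (n * p + 1)) ^ (1 / p) * (∫ u in Ι a b, |g u| ^ q) ^ (1 / q) := by
  have hp : 0 < p := hpq.pos
  have h_kernel : MemLp (fun u => (u - a) ^ n) (ENNReal.ofReal p) (volume.restrict (Ι a b)) := by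
    rw [← integrable_norm_rpow_iff (by fun_prop) (by simpa using hp) ENNReal.ofReal_ne_top,
      ENNReal.toReal_ofReal hp.le, ← IntegrableOn, ← intervalIntegrable_iff]
    have h_cont : Continuous fun u : ℝ => ‖(u - a) ^ n‖ ^ p := by fun_prop (disch := exact hp.le)
    exact h_cont.intervalIntegrable a b
  have h_norm : ∫ u in Ι a b, ‖(u - a) ^ n‖ ^ p = |b - a| ^ (n * p + 1) / (n * p + 1) := by
    rw [← integral_uIoc_abs_sub_rpow (by linarith [show 0 ≤ n * p by positivity])]
    simp_rw [norm_pow, Real.norm_eq_abs, Real.rpow_natCast_mul (abs_nonneg _)]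
  calc |∫ u in a..b, (u - a) ^ n * g u|
      ≤ ∫ u in Ι a b, ‖(u - a) ^ n * g u‖ :=
        norm_integral_le_integral_norm_uIoc (f := fun u => (u - a) ^ n * g u)
    _ = ∫ u in Ι a b, ‖(u - a) ^ n‖ * ‖g u‖ := by simp_rw [norm_mul]
    _ ≤ _ := h_norm ▸ integral_mul_norm_le_Lp_mul_Lq hpq h_kernel hg

theorem abs_integral_sub_pow_mul_le_of_symm_add_le {C : ℝ} (hpq : p.HolderConjugate q) (n : ℕ)
    (hg : MemLp g (ENNReal.ofReal q) (volume.restrict (Ι a b))) (hC₀ : 0 ≤ C)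
    (hC : ∀ u ∈ [[a, b]], |g u| ^ q + |g (a + b - u)| ^ q ≤ 2 * C ^ q) :
    |∫ u in a..b, (u - a) ^ n * g u| ≤ |b - a| ^ (n + 1) / (n * p + 1) ^ (1 / p) * C := by
  have hp : 0 < p := hpq.pos
  have hq : 0 < q := hpq.symm.pos
  have h_int : IntervalIntegrable (fun u => |g u| ^ q) volume a b := by
    rw [intervalIntegrable_iff]
    simpa [IntegrableOn, hq.le] using
      hg.integrable_norm_rpow (by simpa using hq) ENNReal.ofReal_ne_top
  have h_exp : (n * p + 1) * (1 / p) + 1 / q = (n + 1 : ℕ) := by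
    have := hpq.inv_add_inv_eq_one
    push_cast
    field_simp at this ⊢
    linear_combination this
  calc |∫ u in a..b, (u - a) ^ n * g u|
      ≤ (|b - a| ^ (n * p + 1) / (n * p + 1)) ^ (1 / p) * (∫ u in Ι a b, |g u| ^ q) ^ (1 / q) :=
        abs_integral_sub_pow_mul_le_Lp_mul_Lq hpq n hg
    _ ≤ (|b - a| ^ (n * p + 1) / (n * p + 1)) ^ (1 / p) * (|b - a| * C ^ q) ^ (1 / q) := by
        gcongr
        exact integral_uIoc_le_of_symm_add_le h_int hC
    _ = |b - a| ^ ((n * p + 1) * (1 / p)) * |b - a| ^ (1 / q) / (n * p + 1) ^ (1 / p) * C := by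
        rw [Real.div_rpow (by positivity) (by positivity), ← Real.rpow_mul (abs_nonneg _),
          Real.mul_rpow (abs_nonneg _) (by positivity), ← Real.rpow_mul hC₀,
          mul_one_div_cancel hq.ne', Real.rpow_one]
        ring
    _ = |b - a| ^ (n + 1) / (n * p + 1) ^ (1 / p) * C := by
        rw [← Real.rpow_add_of_nonneg (abs_nonneg _) (by positivity) (by positivity), h_exp,
          Real.rpow_natCast]

end Holder

section Midpoint

variable {f f' f'' : ℝ → ℝ} {a b p q : ℝ}

theorem integral_sub_sq_mul_deriv_deriv
    (hf' : ∀ u ∈ [[a, b]], HasDerivWithinAt f (f' u) [[a, b]] u)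
    (hf'' : ∀ u ∈ [[a, b]], HasDerivWithinAt f' (f'' u) [[a, b]] u)
    (hint : IntervalIntegrable f'' volume a b) :
    ∫ u in a..b, (u - a) ^ 2 * f'' u =
      (b - a) ^ 2 * f' b - 2 * (b - a) * f b + 2 * ∫ u in a..b, f u := by
  have h_lin (u : ℝ) : HasDerivWithinAt (fun u => 2 * (u - a)) 2 [[a, b]] u := by
    simpa using (((hasDerivAt_id u).sub_const a).const_mul 2).hasDerivWithinAt
  have h_sq (u : ℝ) : HasDerivWithinAt (fun u => (u - a) ^ 2) (2 * (u - a)) [[a, b]] u := by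
    simpa using (((hasDerivAt_id u).sub_const a).fun_pow 2).hasDerivWithinAt
  have hf'_int : IntervalIntegrable f' volume a b :=
    ContinuousOn.intervalIntegrable fun u hu => (hf'' u hu).continuousWithinAt
  rw [integral_mul_deriv_eq_deriv_mul_of_hasDerivWithinAt (fun u _ => h_sq u) hf''
      ((by fun_prop : Continuous fun u => 2 * (u - a)).intervalIntegrable _ _) hint,
    integral_mul_deriv_eq_deriv_mul_of_hasDerivWithinAt (fun u _ => h_lin u) hf'
      intervalIntegrable_const hf'_int, intervalIntegral.integral_const_mul]
  ring

theorem abs_integral_sub_taylor_le_of_symm_add_le {C : ℝ} (hpq : p.HolderConjugate q)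
    (hf' : ∀ u ∈ [[a, b]], HasDerivWithinAt f (f' u) [[a, b]] u)
    (hf'' : ∀ u ∈ [[a, b]], HasDerivWithinAt f' (f'' u) [[a, b]] u) (hC₀ : 0 ≤ C)
    (hC : ∀ u ∈ [[a, b]], |f'' u| ^ q + |f'' (a + b - u)| ^ q ≤ 2 * C ^ q) :
    |(∫ u in a..b, f u) - ((b - a) * f b - (b - a) ^ 2 / 2 * f' b)| ≤
      |b - a| ^ 3 / (2 * (2 * p + 1) ^ (1 / p)) * C := by
  have h_bound : ∀ u ∈ [[a, b]], |f'' u| ≤ (2 * C ^ q) ^ q⁻¹ := fun u hu =>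
    (Real.le_rpow_inv_iff_of_pos (abs_nonneg _) (by positivity) hpq.symm.pos).2 <|
      (le_add_of_nonneg_right (by positivity)).trans (hC u hu)
  have h_int : IntervalIntegrable f'' volume a b := by
    rw [intervalIntegrable_iff, IntegrableOn, ← memLp_one_iff_integrable]
    exact memLp_uIoc_of_hasDerivWithinAt_of_bound hf'' h_bound
  have h_kernel : |∫ u in a..b, (u - a) ^ 2 * f'' u| ≤
      |b - a| ^ 3 / (2 * p + 1) ^ (1 / p) * C :=
    mod_cast abs_integral_sub_pow_mul_le_of_symm_add_le hpq 2
      (memLp_uIoc_of_hasDerivWithinAt_of_bound hf'' h_bound) hC₀ hC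
  have h_remainder : (∫ u in a..b, f u) - ((b - a) * f b - (b - a) ^ 2 / 2 * f' b) =
      (∫ u in a..b, (u - a) ^ 2 * f'' u) / 2 := by
    rw [integral_sub_sq_mul_deriv_deriv hf' hf'' h_int]
    ring
  rw [h_remainder, abs_div, abs_two, div_le_iff₀ two_pos]
  exact h_kernel.trans_eq (by ring)

theorem abs_integral_sub_midpoint_le_of_symm_add_le {m A B : ℝ} (hab : a ≤ b)
    (hm : m = (a + b) / 2) (hpq : p.HolderConjugate q)
    (hf' : ∀ u ∈ Icc a b, HasDerivWithinAt f (f' u) (Icc a b) u)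
    (hf'' : ∀ u ∈ Icc a b, HasDerivWithinAt f' (f'' u) (Icc a b) u)
    (hA₀ : 0 ≤ A) (hA : ∀ u ∈ Icc a m, |f'' u| ^ q + |f'' (a + m - u)| ^ q ≤ 2 * A ^ q)
    (hB₀ : 0 ≤ B) (hB : ∀ u ∈ Icc m b, |f'' u| ^ q + |f'' (m + b - u)| ^ q ≤ 2 * B ^ q) :
    |(∫ u in a..b, f u) - (b - a) * f m| ≤
      (b - a) ^ 3 / (16 * (2 * p + 1) ^ (1 / p)) * (A + B) := by
  have ham : a ≤ m := by linarith
  have hmb : m ≤ b := by linarith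
  have h_left : [[a, m]] ⊆ Icc a b := uIcc_of_le ham ▸ Icc_subset_Icc_right hmb
  have h_right : [[b, m]] ⊆ Icc a b := uIcc_of_ge hmb ▸ Icc_subset_Icc_left ham
  have h_bound_left := abs_integral_sub_taylor_le_of_symm_add_le hpq
    (fun u hu => (hf' u (h_left hu)).mono h_left) (fun u hu => (hf'' u (h_left hu)).mono h_left)
    hA₀ (by rwa [uIcc_of_le ham])
  have h_bound_right := abs_integral_sub_taylor_le_of_symm_add_le hpq
    (fun u hu => (hf' u (h_right hu)).mono h_right)
    (fun u hu => (hf'' u (h_right hu)).mono h_right)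
    hB₀ (by rwa [uIcc_of_ge hmb, add_comm b])
  have hf_int {c d : ℝ} (h : [[c, d]] ⊆ Icc a b) : IntervalIntegrable f volume c d :=
    ContinuousOn.intervalIntegrable fun u hu => (hf' u (h hu)).continuousWithinAt.mono h
  have h_split : (∫ u in a..m, f u) - ∫ u in b..m, f u = ∫ u in a..b, f u := by
    rw [integral_symm m b, sub_neg_eq_add,
      integral_add_adjacent_intervals (hf_int h_left) (hf_int h_right).symm]
  have h_left_len : m - a = (b - a) / 2 := by rw [hm]; ring
  have h_right_len : m - b = -((b - a) / 2) := by rw [hm]; ring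
  have h_half : |(b - a) / 2| = (b - a) / 2 := abs_of_nonneg (by linarith)
  rw [h_left_len, h_half] at h_bound_left
  rw [h_right_len, abs_neg, h_half] at h_bound_right
  rw [← h_split]
  calc |(∫ u in a..m, f u) - (∫ u in b..m, f u) - (b - a) * f m|
      = |((∫ u in a..m, f u) - ((b - a) / 2 * f m - ((b - a) / 2) ^ 2 / 2 * f' m)) -
          ((∫ u in b..m, f u) - (-((b - a) / 2) * f m - (-((b - a) / 2)) ^ 2 / 2 * f' m))| := by
        ring_nf
    _ ≤ ((b - a) / 2) ^ 3 / (2 * (2 * p + 1) ^ (1 / p)) * A +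
          ((b - a) / 2) ^ 3 / (2 * (2 * p + 1) ^ (1 / p)) * B :=
        (abs_sub _ _).trans (add_le_add h_bound_left h_bound_right)
    _ = (b - a) ^ 3 / (16 * (2 * p + 1) ^ (1 / p)) * (A + B) := by ring

end Midpoint

theorem stmt13_general {f f' f'' : ℝ → ℝ} {a b p q s : ℝ} (hab : a < b)
    (hpq : p.HolderConjugate q)
    (hf' : ∀ u ∈ Icc a b, HasDerivWithinAt f (f' u) (Icc a b) u)
    (hf'' : ∀ u ∈ Icc a b, HasDerivWithinAt f' (f'' u) (Icc a b) u)
    (h_mid : ∀ u ∈ Icc a b, ∀ v ∈ Icc a b,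
      |f'' u| ^ q + |f'' v| ^ q ≤ 2 ^ s * |f'' ((u + v) / 2)| ^ q) :
    |(1 / (b - a)) * (∫ u in a..b, f u) - f ((a + b) / 2)|
      ≤ (2 : ℝ) ^ ((s - 1) / q) * (b - a) ^ 2 / (16 * (2 * p + 1) ^ (1 / p)) *
          (|f'' ((3 * a + b) / 4)| + |f'' ((a + 3 * b) / 4)|) := by
  obtain ⟨m, hm⟩ : ∃ m, m = (a + b) / 2 := ⟨_, rfl⟩
  have h_pair {c d : ℝ} (hc : a ≤ c) (hd : d ≤ b) : ∀ u ∈ Icc c d,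
      |f'' u| ^ q + |f'' (c + d - u)| ^ q ≤ 2 * (2 ^ ((s - 1) / q) * |f'' ((c + d) / 2)|) ^ q := by
    intro u hu
    rw [← two_rpow_mul_rpow_eq s hpq.symm.ne_zero (abs_nonneg _)]
    simpa using h_mid u ⟨hc.trans hu.1, hu.2.trans hd⟩ (c + d - u)
      ⟨by linarith [hu.2], by linarith [hu.1]⟩
  have h_left : (a + m) / 2 = (3 * a + b) / 4 := by rw [hm]; ring
  have h_right : (m + b) / 2 = (a + 3 * b) / 4 := by rw [hm]; ring
  have h_rule := abs_integral_sub_midpoint_le_of_symm_add_le hab.le hm hpq hf' hf''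
    (by positivity) (h_left ▸ h_pair le_rfl (by linarith))
    (by positivity) (h_right ▸ h_pair (by linarith) le_rfl)
  have hba : 0 < b - a := sub_pos.2 hab
  calc |1 / (b - a) * (∫ u in a..b, f u) - f ((a + b) / 2)|
      = |(∫ u in a..b, f u) - (b - a) * f m| / (b - a) := by
        rw [hm, ← abs_of_pos hba, ← abs_div, abs_of_pos hba]
        congr 1
        field_simp
    _ ≤ _ := (div_le_div_iff_of_pos_right hba).2 h_rule
    _ = _ := by field_simp

theorem stmt13 (I : Set ℝ) (hI : Convex ℝ I) (hI0 : I ⊆ Set.Ici (0:ℝ)) (f f' f'' : ℝ → ℝ) (a b : ℝ)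
    (ha : a ∈ interior I) (hb : b ∈ interior I) (hab : a < b)
    (hf' : ∀ y ∈ interior I, HasDerivAt f (f' y) y)
    (hf'' : ∀ y ∈ interior I, HasDerivAt f' (f'' y) y)
    (hfint : IntervalIntegrable f'' MeasureTheory.volume a b)
    (p q : ℝ) (hp : 1 < p) (hq : 1 < q) (hpq : 1 / p + 1 / q = 1)
    (s : ℝ) (hs : s ∈ Set.Ioc (0:ℝ) 1)
    (hconv : ∀ u ∈ Set.Icc a b, ∀ v ∈ Set.Icc a b, ∀ t ∈ Set.Icc (0:ℝ) 1,
      |f'' (t * u + (1 - t) * v)| ^ q ≥ t ^ s * |f'' u| ^ q + (1 - t) ^ s * |f'' v| ^ q) :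
    |(1 / (b - a)) * (∫ u in a..b, f u) - f ((a + b) / 2)|
      ≤ (2:ℝ) ^ ((s - 1) / q) * (b - a) ^ 2 / (16 * (2 * p + 1) ^ (1 / p)) *
          (|f'' ((3 * a + b) / 4)| + |f'' ((a + 3 * b) / 4)|) := by
  have h_sub : Icc a b ⊆ interior I := hI.interior.ordConnected.out ha hb
  have h_conc : SConcaveOn s (Icc a b) fun u => |f'' u| ^ q := hconv
  exact stmt13_general hab (Real.holderConjugate_iff.2 ⟨hp, by simpa using hpq⟩)
    (fun u hu => (hf' u (h_sub hu)).hasDerivWithinAt)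
    (fun u hu => (hf'' u (h_sub hu)).hasDerivWithinAt)
    fun u hu v hv => h_conc.add_le_two_rpow_mul_midpoint hu hv
end
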